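/- arXiv:1907.01634 — 2 statements merged into one kernel-verified Lean document; each statement's English description precedes it below -/
import Mathlib

section
/- Let 0 < q < 1 and set M := φ(-q)/φ(-q^5) and N := φ(-q^6)/φ(-q^30). Then [M^8/N^8 + N^8/M^8] + 96[M^6/N^6 + N^6/M^6] + 1146[M^4/N^4 + N^4/M^4] + 2868[M^2/N^2 + N^2/M^2] + [N^8 + 5^4/N^8] - 16[N^6 + 5^3/N^6] + 188[N^4 + 5^2/N^4] - 1696[N^2 + 5/N^2] - 54[M^6 + 5^3/M^6] + 498[M^4 + 5^2/M^4] - 2106[M^2 + 5/M^2] - 4[N^8/M^6 + 5M^6/N^8] + 6[N^8/M^4 + 5^2 M^4/N^8] - 4[N^8/M^2 + 5^3 M^2/N^8] - 144[N^6/M^4 + 5M^4/N^6] + 64[N^6/M^2 + 5^2 M^2/N^6] - 479[N^4/M^2 + 5M^2/N^4] - 165[M^6/N^4 + 5N^4/M^6] + 124[M^6/N^2 + 5^2 N^2/M^6] - 936[M^4/N^2 + 5N^2/M^4] + 10[M^4 N^4 + 5^4/(M^4 N^4)] + 516[M^2 N^2 + 5^2/(M^2 N^2)] - 39[M^2 N^4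 + 5^3/(M^2 N^4)] - 120[M^4 N^2 + 5^3/(M^4 N^2)] + 12[M^6 N^2 + 5^4/(M^6 N^2)] - [M^6 N^4 + 5^5/(M^6 N^4)] + 6748 = 0. -/
open Real

/-- Ramanujan's theta function `φ(q) = ∑_{n=-∞}^∞ q^(n^2)`. -/
noncomputable def phi (q : ℝ) : ℝ := ∑' n : ℤ, q ^ (n ^ 2)

/-- Ramanujan's theta function `ψ(q) = ∑_{n=0}^∞ q^(n(n+1)/2)`. -/
noncomputable def psi (q : ℝ) : ℝ := ∑' n : ℕ, q ^ (n * (n + 1) / 2)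

/-- `fneg q` is Ramanujan's `f(-q) = ∑_{n=-∞}^∞ (-1)^n q^(n(3n-1)/2)`. -/
noncomputable def fneg (q : ℝ) : ℝ := ∑' n : ℤ, (-1 : ℝ) ^ n * q ^ (n * (3 * n - 1) / 2)

open Filter Topology

/-- The signed theta series `∑_{m ∈ ℤ} ε^m q^(c m² + e m)`. -/
noncomputable def theta (ε : ℝ) (c e : ℤ) (q : ℝ) : ℝ :=
  ∑' m : ℤ, ε ^ m * q ^ (c * m ^ 2 + e * m)

section Lattice

lemma summable_pow_natAbs {r : ℝ} (h0 : 0 ≤ r) (h1 : r < 1) :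
    Summable fun m : ℤ => r ^ m.natAbs :=
  Summable.of_nat_of_neg (by simpa using summable_geometric_of_lt_one h0 h1)
    (by simpa using summable_geometric_of_lt_one h0 h1)

lemma natAbs_le_quadratic {c e : ℤ} (h : |e| < c) (m : ℤ) :
    (m.natAbs : ℤ) ≤ c * m ^ 2 + e * m := by
  rw [Int.natCast_natAbs]
  have h1 : -(|e| * |m|) ≤ e * m := by rw [← abs_mul]; exact neg_abs_le _
  have h2 : |m| ≤ m ^ 2 := by
    rw [← sq_abs]
    rcases (abs_nonneg m).eq_or_lt with h | h
    · simp [← h]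
    · nlinarith
  have := abs_nonneg e
  have := abs_nonneg m
  nlinarith

lemma abs_zpow_le_pow {q : ℝ} (hq0 : q ≠ 0) (hq1 : |q| < 1) {n : ℕ} {k : ℤ} (h : (n : ℤ) ≤ k) :
    |q ^ k| ≤ |q| ^ n := by
  rw [abs_zpow, ← zpow_natCast]
  exact zpow_le_zpow_right_of_le_one₀ (abs_pos.mpr hq0) hq1.le h

lemma abs_sign_zpow {ε : ℝ} (hε : |ε| = 1) (m : ℤ) : |ε ^ m| = 1 := by
  rw [abs_zpow, hε, one_zpow]

lemma summable_abs_theta {ε q : ℝ} {c e : ℤ} (hε : |ε| = 1) (hq0 : q ≠ 0) (hq1 : |q| < 1)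
    (h : |e| < c) : Summable fun m : ℤ => ‖ε ^ m * q ^ (c * m ^ 2 + e * m)‖ := by
  refine Summable.of_nonneg_of_le (fun _ => norm_nonneg _) (fun m => ?_)
    (summable_pow_natAbs (abs_nonneg q) hq1)
  rw [norm_mul, Real.norm_eq_abs, Real.norm_eq_abs, abs_sign_zpow hε, one_mul]
  exact abs_zpow_le_pow hq0 hq1 (natAbs_le_quadratic h m)

lemma phi_eq_theta (q : ℝ) : phi q = theta 1 1 0 q := by simp [phi, theta]

lemma theta_neg {c e : ℤ} (h : Odd (c + e)) (ε q : ℝ) : theta ε c e (-q) = theta (-ε) c e q := by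
  unfold theta
  refine tsum_congr fun m => ?_
  have hpar : Even (c * m ^ 2 + e * m + m) := by
    obtain ⟨k, hk⟩ := h
    have : c * m ^ 2 + e * m + m = c * (m * (m - 1)) + (k + 1) * m + (k + 1) * m := by
      linear_combination m * hk
    rw [this, add_assoc]
    exact ((Int.even_mul_pred_self m).mul_left c).add ⟨_, rfl⟩
  have hsign : (-1 : ℝ) ^ (c * m ^ 2 + e * m) = (-1) ^ m := by
    rcases Int.even_or_odd m with hm | hm
    · rw [hm.neg_one_zpow, Even.neg_one_zpow]
      exact (Int.even_add.mp hpar).mpr hm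
    · rw [hm.neg_one_zpow, Odd.neg_one_zpow]
      rw [← Int.not_even_iff_odd] at hm ⊢
      exact fun h' => hm ((Int.even_add.mp hpar).mp h')
  rw [neg_eq_neg_one_mul q, mul_zpow, hsign, neg_eq_neg_one_mul ε, mul_zpow]
  ring

lemma phi_neg_eq_theta (q : ℝ) : phi (-q) = theta (-1) 1 0 q := by
  rw [phi_eq_theta, theta_neg (by decide)]

variable {q : ℝ}

lemma abs_pow_lt_one (hq1 : |q| < 1) {i : ℕ} (hi : i ≠ 0) : |q ^ i| < 1 := by
  rw [abs_pow]; exact pow_lt_one₀ (abs_nonneg q) hq1 hi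

/-- A product of two theta series as a double series. -/
lemma hasSum_theta_mul {ε ε' x y : ℝ} {c e c' e' : ℤ} (i j : ℕ) (hε : |ε| = 1) (hε' : |ε'| = 1)
    (h : |e| < c) (h' : |e'| < c') (hi : i ≠ 0) (hj : j ≠ 0) (hq0 : q ≠ 0) (hq1 : |q| < 1)
    (hx : x = q ^ i) (hy : y = q ^ j) :
    HasSum (fun p : ℤ × ℤ => ε ^ p.1 * ε' ^ p.2 *
      q ^ (i * (c * p.1 ^ 2 + e * p.1) + j * (c' * p.2 ^ 2 + e' * p.2)))
      (theta ε c e x * theta ε' c' e' y) := by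
  subst hx hy
  have s := summable_abs_theta hε (pow_ne_zero i hq0) (abs_pow_lt_one hq1 hi) h
  have s' := summable_abs_theta hε' (pow_ne_zero j hq0) (abs_pow_lt_one hq1 hj) h'
  unfold theta
  rw [tsum_mul_tsum_of_summable_norm s s']
  refine HasSum.congr_fun (summable_mul_of_summable_norm s s').hasSum fun p => ?_
  rw [zpow_add₀ hq0, zpow_mul, zpow_mul, zpow_natCast, zpow_natCast]
  ring

/-- Splitting a double series along a finite disjoint cover of `ℤ × ℤ` by injective images. -/
lemma HasSum.eq_sum_cosets {n : ℕ} {f : ℤ × ℤ → ℝ} {a : ℝ} (hf : HasSum f a)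
    (σ : Fin n → ℤ × ℤ → ℤ × ℤ)
    (hinj : ∀ i j m n m' n', σ i (m, n) = σ j (m', n') → i = j ∧ m = m' ∧ n = n')
    (hsurj : ∀ k l, ∃ i m n, σ i (m, n) = (k, l))
    (g : Fin n → ℤ × ℤ → ℝ) (hg : ∀ i m n, f (σ i (m, n)) = g i (m, n)) :
    a = ∑ i, ∑' p, g i p := by
  have hbij : Function.Bijective fun x : Fin n × (ℤ × ℤ) => σ x.1 x.2 := by
    constructor
    · rintro ⟨i, m, n⟩ ⟨j, m', n'⟩ h
      obtain ⟨rfl, rfl, rfl⟩ := hinj _ _ _ _ _ _ h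
      rfl
    · rintro ⟨k, l⟩
      obtain ⟨i, m, n, h⟩ := hsurj k l
      exact ⟨(i, m, n), h⟩
  have h := (Equiv.ofBijective _ hbij).hasSum_iff.mpr hf
  rw [← h.tsum_eq, h.summable.tsum_prod, tsum_fintype]
  exact Finset.sum_congr rfl fun i _ => tsum_congr fun p => hg i p.1 p.2

end Lattice

section Identities

variable {q : ℝ}

/-- Splitting a double series by the parity of the sum of the two indices. -/
lemma HasSum.eq_parity_add {f : ℤ × ℤ → ℝ} {a : ℝ} (hf : HasSum f a) :
    a = ∑' p : ℤ × ℤ, f (p.1 + p.2, p.1 - p.2) + ∑' p : ℤ × ℤ, f (p.2 - p.1, -p.1 - 1 - p.2) := by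
  have := hf.eq_sum_cosets ![fun p => (p.1 + p.2, p.1 - p.2), fun p => (p.2 - p.1, -p.1 - 1 - p.2)]
    (by
      intro i j m n m' n' h
      fin_cases i <;> fin_cases j <;> simp at h ⊢ <;> omega)
    (by
      intro k l
      rcases Int.emod_two_eq_zero_or_one (k + l) with h | h
      · exact ⟨0, (k + l) / 2, (k - l) / 2, by simp; omega⟩
      · exact ⟨1, -(k + l + 1) / 2, (k - l - 1) / 2, by simp; omega⟩)
    ![fun p => f (p.1 + p.2, p.1 - p.2), fun p => f (p.2 - p.1, -p.1 - 1 - p.2)]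
    (by
      intro i m n
      fin_cases i <;> rfl)
  simpa [Fin.sum_univ_two] using this

lemma theta_mul_theta_neg {c e : ℤ} (hodd : Odd (c + e)) (h : |e| < c) (hq0 : q ≠ 0)
    (hq1 : |q| < 1) {i : ℕ} (hi : (i : ℤ) = 2 * c) :
    theta 1 c e q * theta 1 c e (-q) = phi (-q ^ i) * theta 1 c e (-q ^ 2) := by
  have hi0 : i ≠ 0 := by have := abs_nonneg e; omega
  rw [theta_neg hodd, theta_neg hodd, phi_neg_eq_theta]
  have hL := hasSum_theta_mul (ε := 1) (ε' := -1) 1 1 (by simp) (by simp) h h one_ne_zero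
    one_ne_zero hq0 hq1 (pow_one q).symm (pow_one q).symm
  have hR := hasSum_theta_mul (ε := -1) (ε' := -1) (c' := 1) (e' := 0) 2 i (by simp) (by simp) h
    (by simp) two_ne_zero hi0 hq0 hq1 rfl rfl
  rw [hL.eq_parity_add, mul_comm (theta _ _ _ _), ← hR.tsum_eq]
  have hzero : ∀ g : ℤ × ℤ → ℝ, (∀ m n, g (m, -1 - n) = -g (m, n)) → ∑' p, g p = 0 := by
    intro g hg
    have := ((Equiv.refl ℤ).prodCongr (Equiv.subLeft (-1 : ℤ))).tsum_eq g
    have h2 : ∀ p, g (((Equiv.refl ℤ).prodCongr (Equiv.subLeft (-1 : ℤ))) p) = -g p :=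
      fun p => hg p.1 p.2
    rw [tsum_congr h2, tsum_neg] at this
    linarith
  rw [hzero fun p => _ * _ * q ^ (_ + _ * (_ * (-p.1 - 1 - p.2) ^ 2 + _)), add_zero]
  · refine tsum_congr fun p => ?_
    have hs : (-1 : ℝ) ^ (p.1 - p.2) = (-1) ^ p.1 * (-1) ^ p.2 := by
      rw [zpow_sub₀ (by norm_num), div_eq_mul_inv, ← zpow_neg, zpow_neg, ← inv_zpow]
      norm_num
    simp only [one_zpow, one_mul, hs, hi]
    congr 2
    push_cast
    ring
  · intro m n
    have hs : (-1 : ℝ) ^ (-m - 1 - (-1 - n)) = -(-1) ^ (-m - 1 - n) := by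
      rw [show -m - 1 - (-1 - n) = (-m - 1 - n) + (2 * n + 1) by ring, zpow_add₀ (by norm_num),
        Odd.neg_one_zpow ⟨n, rfl⟩]
      ring
    simp only [one_zpow, one_mul, hs, neg_mul]
    congr 3
    push_cast
    ring

lemma phi_mul_phi_neg (hq0 : q ≠ 0) (hq1 : |q| < 1) :
    phi q * phi (-q) = phi (-q ^ 2) ^ 2 := by
  have := theta_mul_theta_neg (c := 1) (e := 0) (by decide) (by decide) hq0 hq1 (i := 2) rfl
  rw [phi_eq_theta, phi_eq_theta, this, phi_eq_theta, pow_two (theta _ _ _ _)]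

lemma phi_sq_add_phi_neg_sq (hq0 : q ≠ 0) (hq1 : |q| < 1) :
    phi q ^ 2 + phi (-q) ^ 2 = 2 * phi (q ^ 2) ^ 2 := by
  have h1 := hasSum_theta_mul (ε := 1) (ε' := 1) (c := 1) (e := 0) (c' := 1) (e' := 0) 1 1
    (by simp) (by simp) (by simp) (by simp) one_ne_zero one_ne_zero hq0 hq1
    (pow_one q).symm (pow_one q).symm
  have h2 := hasSum_theta_mul (ε := -1) (ε' := -1) (c := 1) (e := 0) (c' := 1) (e' := 0) 1 1
    (by simp) (by simp) (by simp) (by simp) one_ne_zero one_ne_zero hq0 hq1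
    (pow_one q).symm (pow_one q).symm
  have h3 := hasSum_theta_mul (ε := 1) (ε' := 1) (c := 1) (e := 0) (c' := 1) (e' := 0) 2 2
    (by simp) (by simp) (by simp) (by simp) two_ne_zero two_ne_zero hq0 hq1 rfl rfl
  rw [phi_neg_eq_theta, phi_eq_theta, phi_eq_theta, sq, sq, sq, h1.eq_parity_add,
    h2.eq_parity_add, ← h3.tsum_eq]
  have heven : ∀ m n : ℤ, (-1 : ℝ) ^ (m + n) * (-1) ^ (m - n) = 1 := fun m n => by
    rw [← zpow_add₀ (by norm_num), Even.neg_one_zpow ⟨m, by ring⟩]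
  have hodd : ∀ m n : ℤ, (-1 : ℝ) ^ (n - m) * (-1) ^ (-m - 1 - n) = -1 := fun m n => by
    rw [← zpow_add₀ (by norm_num), Odd.neg_one_zpow ⟨-m - 1, by ring⟩]
  simp only [heven, hodd, one_zpow, one_mul, neg_one_mul, tsum_neg]
  have hexp : ∀ p : ℤ × ℤ, q ^ (((1 : ℕ) : ℤ) * ((p.1 + p.2) ^ 2 + 0 * (p.1 + p.2)) +
      ((1 : ℕ) : ℤ) * ((p.1 - p.2) ^ 2 + 0 * (p.1 - p.2))) =
      q ^ (((2 : ℕ) : ℤ) * (p.1 ^ 2 + 0 * p.1) + ((2 : ℕ) : ℤ) * (p.2 ^ 2 + 0 * p.2)) := by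
    intro p
    congr 1
    push_cast
    ring
  simp only [hexp]
  ring

lemma theta_two_one_sq (hq0 : q ≠ 0) (hq1 : |q| < 1) :
    theta 1 2 1 q ^ 2 = phi q * theta 1 2 1 (q ^ 2) := by
  have h1 := hasSum_theta_mul (ε := 1) (ε' := 1) (c := 2) (e := 1) (c' := 2) (e' := 1) 1 1
    (by simp) (by simp) (by simp) (by simp) one_ne_zero one_ne_zero hq0 hq1
    (pow_one q).symm (pow_one q).symm
  have h2 := hasSum_theta_mul (ε := 1) (ε' := 1) (c := 1) (e := 0) (c' := 2) (e' := 1) 1 2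
    (by simp) (by simp) (by simp) (by simp) one_ne_zero two_ne_zero hq0 hq1
    (pow_one q).symm rfl
  have hcos := h2.eq_sum_cosets ![fun p => (2 * p.2, p.1), fun p => (2 * p.2 + 1, p.1)]
    (by
      intro i j m n m' n' h
      fin_cases i <;> fin_cases j <;> simp at h ⊢ <;> omega)
    (by
      intro k l
      rcases Int.emod_two_eq_zero_or_one k with h | h
      · exact ⟨0, l, k / 2, by simp; omega⟩
      · exact ⟨1, l, k / 2, by simp; omega⟩)
    ![fun p => q ^ ((2 * p.2) ^ 2 + 2 * (2 * p.1 ^ 2 + p.1)),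
      fun p => q ^ ((2 * p.2 + 1) ^ 2 + 2 * (2 * p.1 ^ 2 + p.1))]
    (by
      intro i m n
      fin_cases i <;> simp)
  rw [phi_eq_theta, sq, h1.eq_parity_add, hcos, Fin.sum_univ_two]
  congr 1 <;>
  · refine tsum_congr fun p => ?_
    simp only [one_zpow, one_mul, Matrix.cons_val_zero, Matrix.cons_val_one]
    congr 1
    push_cast
    ring

lemma phi_sq_sub_phi_pow_five_sq (hq0 : q ≠ 0) (hq1 : |q| < 1) :
    phi q ^ 2 - phi (q ^ 5) ^ 2 = 4 * q * (theta 1 5 4 q * theta 1 5 2 q) := by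
  have h1 := hasSum_theta_mul (ε := 1) (ε' := 1) (c := 1) (e := 0) (c' := 1) (e' := 0) 1 1
    (by simp) (by simp) (by simp) (by simp) one_ne_zero one_ne_zero hq0 hq1
    (pow_one q).symm (pow_one q).symm
  have h2 := hasSum_theta_mul (ε := 1) (ε' := 1) (c := 1) (e := 0) (c' := 1) (e' := 0) 5 5
    (by simp) (by simp) (by simp) (by simp) (by simp) (by simp) hq0 hq1 rfl rfl
  have h3 := hasSum_theta_mul (ε := 1) (ε' := 1) (c := 5) (e := 4) (c' := 5) (e' := 2) 1 1
    (by simp) (by simp) (by simp) (by simp) one_ne_zero one_ne_zero hq0 hq1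
    (pow_one q).symm (pow_one q).symm
  have hcos := h1.eq_sum_cosets
    ![fun p => (2 * p.1 + p.2, p.1 - 2 * p.2),
      fun p => (2 * p.1 + p.2 + 1, p.1 - 2 * p.2),
      fun p => (-(2 * p.1 + p.2 + 1), -(p.1 - 2 * p.2)),
      fun p => (-(p.1 - 2 * p.2), 2 * p.1 + p.2 + 1),
      fun p => (p.1 - 2 * p.2, -(2 * p.1 + p.2 + 1))]
    (by
      intro i j m n m' n' h
      fin_cases i <;> fin_cases j <;> simp at h ⊢ <;> omega)
    (by
      intro k l
      have hr : (k - 2 * l) % 5 = 0 ∨ (k - 2 * l) % 5 = 1 ∨ (k - 2 * l) % 5 = 4 ∨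
        (k - 2 * l) % 5 = 3 ∨ (k - 2 * l) % 5 = 2 := by omega
      rcases hr with h | h | h | h | h
      · exact ⟨0, (2 * k + l) / 5, (k - 2 * l) / 5, by simp; omega⟩
      · exact ⟨1, (2 * (k - 1) + l) / 5, (k - 1 - 2 * l) / 5, by simp; omega⟩
      · exact ⟨2, (2 * (-k - 1) - l) / 5, (-k - 1 + 2 * l) / 5, by simp; omega⟩
      · exact ⟨3, (2 * (l - 1) - k) / 5, (l - 1 + 2 * k) / 5, by simp; omega⟩
      · exact ⟨4, (2 * (-l - 1) + k) / 5, (-l - 1 - 2 * k) / 5, by simp; omega⟩)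
    (let shifted : ℤ × ℤ → ℝ := fun p => q ^ (1 + (5 * p.1 ^ 2 + 4 * p.1 + (5 * p.2 ^ 2 + 2 * p.2)))
     ![fun p => q ^ (5 * p.1 ^ 2 + 5 * p.2 ^ 2), shifted, shifted, shifted, shifted])
    (by
      intro i m n
      fin_cases i <;> simp <;> congr 1 <;> ring)
  rw [phi_eq_theta, phi_eq_theta, sq, sq, ← h2.tsum_eq, ← h3.tsum_eq, hcos, mul_assoc,
    ← tsum_mul_left]
  have hq : ∀ k : ℤ, q * q ^ k = q ^ (1 + k) := fun k => by rw [zpow_add₀ hq0, zpow_one]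
  simp [Fin.sum_univ_five, hq]
  ring

lemma phi_mul_phi_pow_fifteen (hq0 : q ≠ 0) (hq1 : |q| < 1) :
    phi q * phi (q ^ 15) = phi (-q ^ 6) * phi (-q ^ 10)
      + 2 * (q * (theta 1 2 1 (q ^ 3) * theta 1 2 1 (q ^ 5))) := by
  have h1 := hasSum_theta_mul (ε := 1) (ε' := 1) (c := 1) (e := 0) (c' := 1) (e' := 0) 1 15
    (by simp) (by simp) (by simp) (by simp) (by simp) (by simp) hq0 hq1 (pow_one q).symm rfl
  have h2 := hasSum_theta_mul (ε := -1) (ε' := -1) (c := 1) (e := 0) (c' := 1) (e' := 0) 6 10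
    (by simp) (by simp) (by simp) (by simp) (by simp) (by simp) hq0 hq1 rfl rfl
  have h3 := (hasSum_theta_mul (ε := 1) (ε' := 1) (c := 2) (e := 1) (c' := 2) (e' := 1) 3 5
    (by simp) (by simp) (by simp) (by simp) (by simp) (by simp) hq0 hq1 rfl rfl).mul_left q
  have hq : ∀ k : ℤ, q * q ^ k = q ^ (1 + k) := fun k => by rw [zpow_add₀ hq0, zpow_one]
  let a : ℤ × ℤ → ℝ := fun p => q ^ ((4 * p.1 + 3 * p.2 + 1) ^ 2 + 15 * p.2 ^ 2)
  let b : ℤ × ℤ → ℝ := fun p => q ^ ((p.1 + 4 * p.2) ^ 2 + 15 * p.1 ^ 2)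
  let c : ℤ × ℤ → ℝ := fun p => q ^ ((p.1 + 8 * p.2 + 2) ^ 2 + 15 * p.1 ^ 2)
  let d : ℤ × ℤ → ℝ := fun p => q ^ (6 * (p.1 + 4 * p.2 + 1) ^ 2 + 10 * p.1 ^ 2)
  have e1 := h1.eq_sum_cosets
    ![fun p => (4 * p.1 + 3 * p.2 + 1, p.2), fun p => (-(4 * p.1 + 3 * p.2 + 1), -p.2),
      fun p => (p.1 + 4 * p.2, p.1),
      fun p => (p.1 + 8 * p.2 + 2, p.1), fun p => (-(p.1 + 8 * p.2 + 2), -p.1)]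
    (by
      intro i j m n m' n' h
      fin_cases i <;> fin_cases j <;> simp at h ⊢ <;> omega)
    (by
      intro k l
      have hr : (k - 3 * l) % 4 = 1 ∨ (k - 3 * l) % 4 = 3 ∨ (k - l) % 4 = 0 ∨
        (k - l) % 8 = 2 ∨ (k - l) % 8 = 6 := by omega
      rcases hr with h | h | h | h | h
      · exact ⟨0, (k - 3 * l - 1) / 4, l, by simp; omega⟩
      · exact ⟨1, (-k + 3 * l - 1) / 4, -l, by simp; omega⟩
      · exact ⟨2, l, (k - l) / 4, by simp; omega⟩
      · exact ⟨3, l, (k - l - 2) / 8, by simp; omega⟩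
      · exact ⟨4, -l, (-k + l - 2) / 8, by simp; omega⟩)
    ![a, a, b, c, c]
    (by
      intro i m n
      fin_cases i <;> simp [a, b, c] <;> congr 1 <;> ring)
  have e2 := h2.eq_sum_cosets
    ![fun p => (p.1 - p.2, p.1 + p.2),
      fun p => (p.1 + 4 * p.2 + 1, p.1), fun p => (-(p.1 + 4 * p.2 + 1), -p.1)]
    (by
      intro i j m n m' n' h
      fin_cases i <;> fin_cases j <;> simp at h ⊢ <;> omega)
    (by
      intro k l
      have hr : (k - l) % 2 = 0 ∨ (k - l) % 4 = 1 ∨ (k - l) % 4 = 3 := by omega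
      rcases hr with h | h | h
      · exact ⟨0, (k + l) / 2, (l - k) / 2, by simp; omega⟩
      · exact ⟨1, l, (k - l - 1) / 4, by simp; omega⟩
      · exact ⟨2, -l, (-k + l - 1) / 4, by simp; omega⟩)
    ![b, -d, -d]
    (by
      intro i m n
      fin_cases i
      · simp only [b, ← zpow_add₀ (show (-1 : ℝ) ≠ 0 by norm_num)]
        rw [Even.neg_one_zpow ⟨m, by simp⟩]
        simp
        congr 1
        ring
      · simp only [d, ← zpow_add₀ (show (-1 : ℝ) ≠ 0 by norm_num)]
        rw [Odd.neg_one_zpow ⟨m + 2 * n, by simp; ring⟩]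
        simp
      · simp only [d, ← zpow_add₀ (show (-1 : ℝ) ≠ 0 by norm_num)]
        rw [Odd.neg_one_zpow ⟨-m - 2 * n - 1, by simp; ring⟩]
        simp
        congr 1
        ring)
  have e3 := h3.eq_sum_cosets
    ![fun p => (p.1 + 2 * p.2, p.1), fun p => (-p.1 - 3 * p.2 - 1, p.2 - p.1),
      fun p => (p.2 - p.1, -p.1 - 3 * p.2 - 1)]
    (by
      intro i j m n m' n' h
      fin_cases i <;> fin_cases j <;> simp at h ⊢ <;> omega)
    (by
      intro k l
      have hr : (k - l) % 2 = 0 ∨ (k - l) % 4 = 3 ∨ (k - l) % 4 = 1 := by omega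
      rcases hr with h | h | h
      · exact ⟨0, l, (k - l) / 2, by simp; omega⟩
      · exact ⟨1, (l - k - 1) / 4 - l, (l - k - 1) / 4, by simp; omega⟩
      · exact ⟨2, (k - l - 1) / 4 - k, (k - l - 1) / 4, by simp; omega⟩)
    ![a, c, d]
    (by
      intro i m n
      fin_cases i <;> simp [a, c, d, hq] <;> congr 1 <;> ring)
  rw [phi_neg_eq_theta, phi_neg_eq_theta, phi_eq_theta, phi_eq_theta, e1, e2, e3]
  simp [Fin.sum_univ_five, Fin.sum_univ_three, tsum_neg]
  ring

lemma phi_pow_three_mul_phi_pow_five (hq0 : q ≠ 0) (hq1 : |q| < 1) :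
    phi (q ^ 3) * phi (q ^ 5) = phi (-q ^ 2) * phi (-q ^ 30)
      + 2 * (q ^ 2 * (theta 1 2 1 q * theta 1 2 1 (q ^ 15))) := by
  have h1 := hasSum_theta_mul (ε := 1) (ε' := 1) (c := 1) (e := 0) (c' := 1) (e' := 0) 3 5
    (by simp) (by simp) (by simp) (by simp) (by simp) (by simp) hq0 hq1 rfl rfl
  have h2 := hasSum_theta_mul (ε := -1) (ε' := -1) (c := 1) (e := 0) (c' := 1) (e' := 0) 2 30
    (by simp) (by simp) (by simp) (by simp) (by simp) (by simp) hq0 hq1 rfl rfl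
  have h3 := (hasSum_theta_mul (ε := 1) (ε' := 1) (c := 2) (e := 1) (c' := 2) (e' := 1) 1 15
    (by simp) (by simp) (by simp) (by simp) (by simp) (by simp) hq0 hq1
    (pow_one q).symm rfl).mul_left (q ^ 2)
  have hq : ∀ k : ℤ, q ^ 2 * q ^ k = q ^ (2 + k) := fun k => by rw [zpow_add₀ hq0]; rfl
  let a : ℤ × ℤ → ℝ := fun p => q ^ (3 * (p.1 + 4 * p.2 + 1) ^ 2 + 5 * p.1 ^ 2)
  let b : ℤ × ℤ → ℝ := fun p => q ^ (3 * (p.1 + 3 * p.2) ^ 2 + 5 * (p.1 - p.2) ^ 2)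
  let c : ℤ × ℤ → ℝ := fun p => q ^ (3 * (2 * p.1 + 3 * p.2 + 2) ^ 2 + 5 * (2 * p.1 - p.2) ^ 2)
  let d : ℤ × ℤ → ℝ := fun p => q ^ (2 * (p.1 + 4 * p.2 + 1) ^ 2 + 30 * p.1 ^ 2)
  have e1 := h1.eq_sum_cosets
    ![fun p => (p.1 + 4 * p.2 + 1, p.1), fun p => (-(p.1 + 4 * p.2 + 1), -p.1),
      fun p => (p.1 + 3 * p.2, p.1 - p.2),
      fun p => (2 * p.1 + 3 * p.2 + 2, 2 * p.1 - p.2),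
      fun p => (-(2 * p.1 + 3 * p.2 + 2), -(2 * p.1 - p.2))]
    (by
      intro i j m n m' n' h
      fin_cases i <;> fin_cases j <;> simp at h ⊢ <;> omega)
    (by
      intro k l
      have hr : (k - l) % 4 = 1 ∨ (k - l) % 4 = 3 ∨ (k - l) % 4 = 0 ∨
        (k + 3 * l) % 8 = 2 ∨ (k + 3 * l) % 8 = 6 := by omega
      rcases hr with h | h | h | h | h
      · exact ⟨0, l, (k - l - 1) / 4, by simp; omega⟩
      · exact ⟨1, -l, (-k + l - 1) / 4, by simp; omega⟩
      · exact ⟨2, l + (k - l) / 4, (k - l) / 4, by simp; omega⟩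
      · exact ⟨3, (k + 3 * l - 2) / 8, (k - l - 2) / 4, by simp; omega⟩
      · exact ⟨4, (-k - 3 * l - 2) / 8, (-k + l - 2) / 4, by simp; omega⟩)
    ![a, a, b, c, c]
    (by
      intro i m n
      fin_cases i <;> simp [a, b, c] <;> congr 1 <;> ring)
  have e2 := h2.eq_sum_cosets
    ![fun p => (p.2 + 2 * p.1, p.2),
      fun p => (p.1 + 4 * p.2 + 1, p.1), fun p => (-(p.1 + 4 * p.2 + 1), -p.1)]
    (by
      intro i j m n m' n' h
      fin_cases i <;> fin_cases j <;> simp at h ⊢ <;> omega)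
    (by
      intro k l
      have hr : (k - l) % 2 = 0 ∨ (k - l) % 4 = 1 ∨ (k - l) % 4 = 3 := by omega
      rcases hr with h | h | h
      · exact ⟨0, (k - l) / 2, l, by simp; omega⟩
      · exact ⟨1, l, (k - l - 1) / 4, by simp; omega⟩
      · exact ⟨2, -l, (-k + l - 1) / 4, by simp; omega⟩)
    ![b, -d, -d]
    (by
      intro i m n
      fin_cases i
      · simp only [b, ← zpow_add₀ (show (-1 : ℝ) ≠ 0 by norm_num)]
        rw [Even.neg_one_zpow ⟨m + n, by simp; ring⟩]
        simp
        congr 1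
        ring
      · simp only [d, ← zpow_add₀ (show (-1 : ℝ) ≠ 0 by norm_num)]
        rw [Odd.neg_one_zpow ⟨m + 2 * n, by simp; ring⟩]
        simp
      · simp only [d, ← zpow_add₀ (show (-1 : ℝ) ≠ 0 by norm_num)]
        rw [Odd.neg_one_zpow ⟨-m - 2 * n - 1, by simp; ring⟩]
        simp
        congr 1
        ring)
  have e3 := h3.eq_sum_cosets
    ![fun p => (-2 * p.1 - 3 * p.2 - 1, p.2), fun p => (p.1 + 4 * p.2 + 2, p.1),
      fun p => (p.2 + 4 * p.1, p.2)]
    (by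
      intro i j m n m' n' h
      fin_cases i <;> fin_cases j <;> simp at h ⊢ <;> omega)
    (by
      intro k l
      have hr : (k - l) % 2 = 1 ∨ (k - l) % 4 = 2 ∨ (k - l) % 4 = 0 := by omega
      rcases hr with h | h | h
      · exact ⟨0, (-k - 3 * l - 1) / 2, l, by simp; omega⟩
      · exact ⟨1, l, (k - l - 2) / 4, by simp; omega⟩
      · exact ⟨2, (k - l) / 4, l, by simp; omega⟩)
    ![a, c, d]
    (by
      intro i m n
      fin_cases i <;> simp [a, c, d, hq] <;> congr 1 <;> ring)
  rw [phi_neg_eq_theta, phi_neg_eq_theta, phi_eq_theta, phi_eq_theta, e1, e2, e3]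
  simp [Fin.sum_univ_five, Fin.sum_univ_three, tsum_neg]
  ring

end Identities

section Origin

lemma phi_zero : phi 0 = 1 := by
  rw [phi, tsum_eq_single 0 fun m hm => zero_zpow _ (pow_ne_zero 2 hm)]
  simp

lemma hasDerivAt_phi_zero : HasDerivAt phi 2 0 := by
  obtain ⟨C, hC⟩ := summable_pow_natAbs (r := 1 / 2) (by norm_num) (by norm_num)
  have key : ∀ q : ℝ, |q| ≤ 1 / 2 → |phi q - phi 0 - (q - 0) * 2| ≤ C * q ^ 2 := by
    intro q hq
    rcases eq_or_ne q 0 with rfl | hq0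
    · simp
    have hs : HasSum (fun m : ℤ => q ^ (m ^ 2)) (phi q) := by
      have := (summable_abs_theta (ε := 1) (c := 1) (e := 0) (by norm_num) hq0
        (by linarith) (by norm_num)).of_norm
      simp only [one_zpow, one_mul, zero_mul, add_zero] at this
      exact this.hasSum
    have ht : HasSum (fun m : ℤ => if m ∈ ({-1, 0, 1} : Finset ℤ) then q ^ (m ^ 2) else 0)
        (∑ m ∈ ({-1, 0, 1} : Finset ℤ), q ^ (m ^ 2)) := by
      have := hasSum_sum_of_ne_finset_zero (L := .unconditional ℤ) (s := ({-1, 0, 1} : Finset ℤ))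
        (f := fun m : ℤ => if m ∈ ({-1, 0, 1} : Finset ℤ) then q ^ (m ^ 2) else 0)
        (fun m hm => if_neg hm)
      rwa [Finset.sum_congr rfl fun m hm => if_pos hm] at this
    have hsum : ∑ m ∈ ({-1, 0, 1} : Finset ℤ), q ^ (m ^ 2) = 1 + 2 * q := by
      rw [Finset.sum_insert (by decide), Finset.sum_insert (by decide), Finset.sum_singleton]
      norm_num
      ring
    rw [hsum] at ht
    have hbound := tsum_of_norm_bounded (hC.mul_right (q ^ 2)) (f := fun m : ℤ => q ^ (m ^ 2) -
      if m ∈ ({-1, 0, 1} : Finset ℤ) then q ^ (m ^ 2) else 0) fun m => by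
        split_ifs with hm
        · simp; positivity
        · have h2 : 2 ≤ |m| := by
            simp only [Finset.mem_insert, Finset.mem_singleton] at hm
            rw [Int.abs_eq_natAbs]; omega
          have h3 : ((m.natAbs + 2 : ℕ) : ℤ) ≤ m ^ 2 := by
            rw [← sq_abs m]
            push_cast
            nlinarith
          rw [sub_zero, Real.norm_eq_abs]
          refine (abs_zpow_le_pow hq0 (by linarith) h3).trans ?_
          rw [pow_add, sq_abs]
          gcongr
    rw [(hs.sub ht).tsum_eq, Real.norm_eq_abs] at hbound
    rw [phi_zero]
    calc |phi q - 1 - (q - 0) * 2| = |phi q - (1 + 2 * q)| := by ring_nf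
      _ ≤ _ := hbound
  rw [hasDerivAt_iff_isLittleO]
  refine Asymptotics.IsBigO.trans_isLittleO (g := fun q : ℝ => q ^ 2) ?_ ?_
  · refine Asymptotics.IsBigO.of_bound C ?_
    filter_upwards [Metric.closedBall_mem_nhds (0 : ℝ) (by norm_num : (0 : ℝ) < 1 / 2)] with q hq
    have := key q (by simpa using hq)
    simpa using this
  · simpa using Asymptotics.isLittleO_pow_id (𝕜 := ℝ) one_lt_two

lemma eventually_theta_two_one_pos : ∀ᶠ q in 𝓝[≠] (0 : ℝ), 0 < theta 1 2 1 q := by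
  obtain ⟨C, hC⟩ := summable_pow_natAbs (r := 1 / 2) (by norm_num) (by norm_num)
  have hC0 : 0 ≤ C := hC.nonneg fun m => by positivity
  have key : ∀ q : ℝ, q ≠ 0 → |q| ≤ 1 / 2 → |theta 1 2 1 q - 1| ≤ C * (2 * |q|) := by
    intro q hq0 hq
    have hs := (summable_abs_theta (ε := 1) (c := 2) (e := 1) (by norm_num) hq0
        (by linarith) (by norm_num)).of_norm.hasSum
    have hbound := tsum_of_norm_bounded (hC.mul_right (2 * |q|)) (f := fun m : ℤ =>
      1 ^ m * q ^ (2 * m ^ 2 + 1 * m) - if m = 0 then 1 else 0) fun m => by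
        split_ifs with hm
        · simp only [hm]; simp
        · obtain ⟨k, hk⟩ : ∃ k, m.natAbs = k + 1 := Nat.exists_eq_succ_of_ne_zero (by omega)
          rw [sub_zero, Real.norm_eq_abs, one_zpow, one_mul]
          refine (abs_zpow_le_pow hq0 (by linarith) (natAbs_le_quadratic (by norm_num) m)).trans ?_
          rw [hk, pow_succ]
          calc |q| ^ k * |q| ≤ (1 / 2) ^ k * |q| := by gcongr
            _ = _ := by ring
    rw [(hs.sub (hasSum_ite_eq 0 1)).tsum_eq, Real.norm_eq_abs] at hbound
    exact hbound
  have hev : ∀ᶠ q : ℝ in 𝓝 0, |q| < 1 / (2 * C + 2) :=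
    (continuous_abs.tendsto' (0 : ℝ) 0 abs_zero).eventually_lt_const (by positivity)
  filter_upwards [self_mem_nhdsWithin, nhdsWithin_le_nhds hev] with q hq0 hq
  rw [lt_div_iff₀ (by positivity)] at hq
  have := abs_nonneg q
  have := abs_le.mp (key q hq0 (by nlinarith))
  nlinarith

/-- A property which holds near `0` and propagates from `-q ^ 2` to `q` holds on the punctured
unit disc. -/
lemma neg_sq_induction {P : ℝ → Prop} (h0 : ∀ᶠ q in 𝓝[≠] (0 : ℝ), P q)
    (hstep : ∀ q, q ≠ 0 → |q| < 1 → P (-q ^ 2) → P q) {q : ℝ} (hq0 : q ≠ 0) (hq1 : |q| < 1) :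
    P q := by
  have ht : Tendsto (fun n : ℕ => -q ^ 2 ^ (n + 1)) atTop (𝓝[≠] 0) := by
    refine tendsto_nhdsWithin_iff.mpr ⟨?_, .of_forall fun n => neg_ne_zero.mpr (pow_ne_zero _ hq0)⟩
    have := ((tendsto_pow_atTop_nhds_zero_of_abs_lt_one hq1).comp
      ((tendsto_pow_atTop_atTop_of_one_lt one_lt_two).comp (tendsto_add_atTop_nat 1))).neg
    simpa using this
  obtain ⟨n, hn⟩ := (ht.eventually h0).exists
  have down : ∀ n : ℕ, P (-q ^ 2 ^ (n + 1)) → P q := by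
    intro n
    induction n with
    | zero => exact fun h => hstep q hq0 hq1 (by simpa using h)
    | succ k ih =>
      intro h
      refine ih (hstep _ (neg_ne_zero.mpr (pow_ne_zero _ hq0)) ?_ ?_)
      · rw [abs_neg]; exact abs_pow_lt_one hq1 (by positivity)
      · rwa [neg_sq, ← pow_mul, ← pow_succ]
  exact down n hn

end Origin

section Positivity

variable {q : ℝ}

lemma theta_pos_of_pos {c e : ℤ} (h : |e| < c) (hq : 0 < q) (hq1 : |q| < 1) :
    0 < theta 1 c e q := by
  refine (summable_abs_theta (by norm_num) hq.ne' hq1 h).of_norm.tsum_pos (fun m => ?_) 0 ?_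
  · rw [one_zpow]; positivity
  · simp

lemma phi_pos (hq0 : q ≠ 0) (hq1 : |q| < 1) : 0 < phi q := by
  have hp : ∀ x : ℝ, 0 < x → |x| < 1 → 0 < phi x := fun x hx hx1 => by
    rw [phi_eq_theta]; exact theta_pos_of_pos (by norm_num) hx hx1
  refine neg_sq_induction (P := fun q => 0 < phi q) ?_ ?_ hq0 hq1
  · refine nhdsWithin_le_nhds ?_
    exact hasDerivAt_phi_zero.continuousAt.eventually_const_lt (by rw [phi_zero]; norm_num)
  · intro q hq0 hq1 h
    have hm := phi_mul_phi_neg hq0 hq1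
    rcases hq0.lt_or_gt with hneg | hpos
    · have := hp (-q) (by linarith) (by rwa [abs_neg])
      exact pos_of_mul_pos_left (hm ▸ by positivity) this.le
    · exact hp q hpos hq1

lemma theta_two_one_pos (hq0 : q ≠ 0) (hq1 : |q| < 1) : 0 < theta 1 2 1 q := by
  refine neg_sq_induction (P := fun q => 0 < theta 1 2 1 q) eventually_theta_two_one_pos ?_ hq0 hq1
  intro q hq0 hq1 h
  have hm := theta_mul_theta_neg (c := 2) (e := 1) (by decide) (by norm_num) hq0 hq1
    (i := 4) (by norm_num)
  rcases hq0.lt_or_gt with hneg | hpos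
  · have := theta_pos_of_pos (c := 2) (e := 1) (by norm_num) (neg_pos.mpr hneg) (by rwa [abs_neg])
    have h4 : 0 < phi (-q ^ 4) := phi_pos (neg_ne_zero.mpr (pow_ne_zero _ hq0))
      (by rw [abs_neg]; exact abs_pow_lt_one hq1 (by norm_num))
    exact pos_of_mul_pos_left (hm ▸ by positivity) this.le
  · exact theta_pos_of_pos (by norm_num) hpos hq1

end Positivity

section Quintic

variable {q : ℝ}

lemma neg_pow_mem (hq0 : q ≠ 0) (hq1 : |q| < 1) {n : ℕ} (hn : n ≠ 0) :
    -q ^ n ≠ 0 ∧ |(-q ^ n)| < 1 :=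
  ⟨neg_ne_zero.mpr (pow_ne_zero _ hq0), by rw [abs_neg]; exact abs_pow_lt_one hq1 hn⟩

/-- The quintic combination `(φ(q)² - φ(q⁵)²)(5φ(q⁵)² - φ(q)²)`. -/
noncomputable def quintic (q : ℝ) : ℝ :=
  (phi q ^ 2 - phi (q ^ 5) ^ 2) * (5 * phi (q ^ 5) ^ 2 - phi q ^ 2)

lemma phi_pow_five_mul_neg (hq0 : q ≠ 0) (hq1 : |q| < 1) :
    phi (q ^ 5) * phi (-q ^ 5) = phi (-q ^ 10) ^ 2 := by
  rw [phi_mul_phi_neg (pow_ne_zero 5 hq0) (abs_pow_lt_one hq1 (by norm_num)), ← pow_mul]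

lemma phi_sub_mul_neg (hq0 : q ≠ 0) (hq1 : |q| < 1) :
    (phi q ^ 2 - phi (q ^ 5) ^ 2) * (phi (-q) ^ 2 - phi (-q ^ 5) ^ 2) =
      4 * phi (-q ^ 10) ^ 2 * (phi (-q ^ 2) ^ 2 - phi (-q ^ 10) ^ 2) := by
  have h1 := phi_sq_sub_phi_pow_five_sq hq0 hq1
  have h2 := phi_sq_sub_phi_pow_five_sq (neg_ne_zero.mpr hq0) (by rwa [abs_neg])
  obtain ⟨hn0, hn1⟩ := neg_pow_mem hq0 hq1 two_ne_zero
  have h3 := phi_sq_sub_phi_pow_five_sq hn0 hn1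
  have h4 := theta_mul_theta_neg (c := 5) (e := 4) (by decide) (by norm_num) hq0 hq1
    (i := 10) (by norm_num)
  have h5 := theta_mul_theta_neg (c := 5) (e := 2) (by decide) (by norm_num) hq0 hq1
    (i := 10) (by norm_num)
  rw [show (-q) ^ 5 = -q ^ 5 by ring] at h2
  rw [show (-q ^ 2) ^ 5 = -q ^ 10 by ring] at h3
  rw [h1, h2, h3]
  linear_combination (-16 * q ^ 2 * (theta 1 5 2 q * theta 1 5 2 (-q))) * h4
    - 16 * q ^ 2 * (phi (-q ^ 10) * theta 1 5 4 (-q ^ 2)) * h5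

lemma five_phi_sub_mul_neg (hq0 : q ≠ 0) (hq1 : |q| < 1) :
    (5 * phi (q ^ 5) ^ 2 - phi q ^ 2) * (5 * phi (-q ^ 5) ^ 2 - phi (-q) ^ 2) =
      4 * phi (-q ^ 2) ^ 2 * (5 * phi (-q ^ 10) ^ 2 - phi (-q ^ 2) ^ 2) := by
  have h := phi_sub_mul_neg hq0 hq1
  have hd := phi_mul_phi_neg hq0 hq1
  have hD := phi_pow_five_mul_neg hq0 hq1
  rw [← hd, ← hD] at h ⊢
  linear_combination 5 * h

lemma quintic_add_neg (hq0 : q ≠ 0) (hq1 : |q| < 1) :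
    quintic q + quintic (-q) = 4 * (quintic (-q ^ 2) + quintic (q ^ 2)) := by
  have h := phi_sub_mul_neg hq0 hq1
  have hd := phi_mul_phi_neg hq0 hq1
  have hD := phi_pow_five_mul_neg hq0 hq1
  have hs := phi_sq_add_phi_neg_sq hq0 hq1
  have hS := phi_sq_add_phi_neg_sq (pow_ne_zero 5 hq0) (abs_pow_lt_one hq1 (by norm_num))
  rw [← pow_mul] at hS
  unfold quintic
  rw [show (-q) ^ 5 = -q ^ 5 by ring, show (-q ^ 2) ^ 5 = -q ^ 10 by ring, ← pow_mul]
  norm_num only at hS ⊢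
  rw [← hd, ← hD] at h ⊢
  have hc : phi (q ^ 2) ^ 2 = (phi q ^ 2 + phi (-q) ^ 2) / 2 := by linarith
  have hC : phi (q ^ 10) ^ 2 = (phi (q ^ 5) ^ 2 + phi (-q ^ 5) ^ 2) / 2 := by linarith
  rw [hc, hC]
  linear_combination 6 * h

lemma hasDerivAt_phi_pow_zero {n : ℕ} (hn : 2 ≤ n) : HasDerivAt (fun q => phi (q ^ n)) 0 0 := by
  have h0 : (0 : ℝ) ^ n = 0 := zero_pow (by omega)
  have h := HasDerivAt.comp (0 : ℝ) (h₂ := phi) (h := fun q => q ^ n) (h₂' := 2)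
    (by rw [h0]; exact hasDerivAt_phi_zero) (hasDerivAt_pow n 0)
  rw [zero_pow (by omega : n - 1 ≠ 0)] at h
  simpa [Function.comp_def] using h

lemma hasDerivAt_quintic_zero : HasDerivAt quintic 16 0 := by
  have h1 := hasDerivAt_phi_zero.fun_pow 2
  have h5 := (hasDerivAt_phi_pow_zero (n := 5) (by norm_num)).fun_pow 2
  have h := (h1.fun_sub h5).fun_mul ((h5.const_mul 5).fun_sub h1)
  norm_num [phi_zero] at h
  exact h

lemma quintic_zero : quintic 0 = 0 := by simp [quintic]

lemma quintic_neg (hq0 : q ≠ 0) (hq1 : |q| < 1) : quintic (-q) = -quintic q := by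
  have hderiv : HasDerivAt (fun q => quintic q + quintic (-q)) 0 0 := by
    have := hasDerivAt_quintic_zero.fun_add
      (HasDerivAt.comp (0 : ℝ) (h := fun q => -q) (by rw [neg_zero]; exact hasDerivAt_quintic_zero)
        (hasDerivAt_neg 0))
    simpa using this
  have hbound : ∀ ε > 0, ∀ x : ℝ, x ≠ 0 → |x| < 1 → |x| ≤ 1 / 4 →
      |quintic x + quintic (-x)| ≤ ε * |x| := by
    intro ε hε x hx0 hx1
    refine neg_sq_induction (P := fun x => |x| ≤ 1 / 4 → |quintic x + quintic (-x)| ≤ ε * |x|)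
      ?_ ?_ hx0 hx1
    · have := (hasDerivAt_iff_isLittleO.mp hderiv).bound hε
      refine nhdsWithin_le_nhds ?_
      filter_upwards [this] with x hx _
      simpa [quintic_zero] using hx
    · intro x hx0 hx1 hP hx4
      rw [neg_neg, abs_neg, abs_pow] at hP
      have h4 : |x| ^ 2 ≤ 1 / 4 * |x| := by
        rw [sq]; gcongr
      have := hP (by linarith)
      rw [quintic_add_neg hx0 hx1, abs_mul, abs_of_pos four_pos]
      calc 4 * |quintic (-x ^ 2) + quintic (x ^ 2)| ≤ 4 * (ε * (1 / 4 * |x|)) := by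
            gcongr; exact this.trans (by gcongr)
        _ = ε * |x| := by ring
  have hzero : ∀ᶠ x in 𝓝[≠] (0 : ℝ), quintic x + quintic (-x) = 0 := by
    filter_upwards [self_mem_nhdsWithin, nhdsWithin_le_nhds
      (Metric.closedBall_mem_nhds (0 : ℝ) (by norm_num : (0 : ℝ) < 1 / 4))] with x hx0 hx
    have hx4 : |x| ≤ 1 / 4 := by simpa using hx
    have hx0' : 0 < |x| := abs_pos.mpr hx0
    refine abs_nonpos_iff.mp (le_of_forall_pos_le_add fun δ hδ => ?_)
    have := hbound (δ / |x|) (by positivity) x hx0 (by linarith) hx4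
    rw [div_mul_cancel₀ _ hx0'.ne'] at this
    linarith
  have := neg_sq_induction hzero (fun x hx0 hx1 h => by
    rw [neg_neg] at h
    rw [quintic_add_neg hx0 hx1, h, mul_zero]) hq0 hq1
  linarith

lemma quintic_sq (hq0 : q ≠ 0) (hq1 : |q| < 1) :
    quintic q ^ 2 = -16 * phi (-q ^ 2) ^ 2 * phi (-q ^ 10) ^ 2 * quintic (-q ^ 2) := by
  have h := quintic_neg hq0 hq1
  have h1 := phi_sub_mul_neg hq0 hq1
  have h2 := five_phi_sub_mul_neg hq0 hq1
  have h3 : quintic q ^ 2 = -(quintic q * quintic (-q)) := by rw [h]; ring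
  rw [h3]
  unfold quintic
  rw [show (-q) ^ 5 = -q ^ 5 by ring, show (-q ^ 2) ^ 5 = -q ^ 10 by ring]
  linear_combination (-(5 * phi (q ^ 5) ^ 2 - phi q ^ 2) *
    (5 * phi (-q ^ 5) ^ 2 - phi (-q) ^ 2)) * h1 - 4 * phi (-q ^ 10) ^ 2 *
    (phi (-q ^ 2) ^ 2 - phi (-q ^ 10) ^ 2) * h2

lemma quintic_ne_zero (hq0 : q ≠ 0) (hq1 : |q| < 1) : quintic q ≠ 0 := by
  refine neg_sq_induction (P := fun q => quintic q ≠ 0)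
    (hasDerivAt_quintic_zero.eventually_ne (by norm_num)) (fun q hq0 hq1 h => ?_) hq0 hq1
  have h2 := neg_pow_mem hq0 hq1 two_ne_zero
  have h10 := neg_pow_mem hq0 hq1 (n := 10) (by norm_num)
  have := (phi_pos h2.1 h2.2).ne'
  have := (phi_pos h10.1 h10.2).ne'
  refine fun h0 => h ?_
  have := quintic_sq hq0 hq1
  rw [h0] at this
  simp_all

lemma quintic_pos (hq0 : 0 < q) (hq1 : |q| < 1) : 0 < quintic q := by
  rw [abs_of_pos hq0] at hq1
  have hs0 : √q ≠ 0 := (sqrt_pos.mpr hq0).ne'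
  have hs1 : |√q| < 1 := by
    rw [abs_of_nonneg (sqrt_nonneg q), sqrt_lt' one_pos]; simpa using hq1
  have h := quintic_sq hs0 hs1
  have h0 := quintic_ne_zero hs0 hs1
  have h2 := neg_pow_mem hs0 hs1 two_ne_zero
  have h10 := neg_pow_mem hs0 hs1 (n := 10) (by norm_num)
  have p2 := phi_pos h2.1 h2.2
  have p10 := phi_pos h10.1 h10.2
  rw [sq_sqrt hq0.le] at h p2
  rw [quintic_neg hq0.ne' (by rwa [abs_of_pos hq0])] at h
  have h' : 0 < 16 * phi (-q) ^ 2 * phi (-√q ^ 10) ^ 2 * quintic q := by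
    have : 0 < quintic √q ^ 2 := by positivity
    linarith
  exact pos_of_mul_pos_right h' (by positivity)

lemma quintic_mul_quintic_pow_three_pos (hq0 : q ≠ 0) (hq1 : |q| < 1) :
    0 < quintic q * quintic (q ^ 3) := by
  rcases hq0.lt_or_gt with hneg | hpos
  · have hn : 0 < -q := by linarith
    have hn1 : |(-q)| < 1 := by rwa [abs_neg]
    have h1 := quintic_neg hq0 hq1
    have h3 := quintic_neg (pow_ne_zero 3 hq0) (abs_pow_lt_one hq1 (by norm_num))
    rw [show -q ^ 3 = (-q) ^ 3 by ring] at h3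
    rw [← neg_mul_neg, ← h1, ← h3]
    exact mul_pos (quintic_pos hn hn1) (quintic_pos (by positivity)
      (abs_pow_lt_one hn1 (by norm_num)))
  · exact mul_pos (quintic_pos hpos hq1) (quintic_pos (by positivity)
      (abs_pow_lt_one hq1 (by norm_num)))

end Quintic

section Fifteen

variable {q : ℝ}

/-- The algebra behind the degree fifteen relation, in terms of square roots. -/
lemma mul_sub_pow_four_of_cross {α β α' β' : ℝ} (hα : 0 < α) (hβ : 0 < β) (hα' : 0 < α')
    (hβ' : 0 < β') (h1 : β' * (α ^ 2 - β ^ 2) = β * (β' ^ 2 - α' ^ 2))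
    (h2 : α' * (α ^ 2 + β ^ 2) = α * (α' ^ 2 + β' ^ 2)) :
    (α ^ 4 - β ^ 4) ^ 2 = 4 * (β ^ 2 * β' ^ 2 - α ^ 2 * α' ^ 2) * α ^ 2 * β ^ 2 := by
  have hc : α ^ 2 * α' ^ 2 + (α * β' - α' * β) ^ 2 - β ^ 2 * β' ^ 2 = 0 := by
    have hne : α' * β + α * β' ≠ 0 := by positivity
    refine (mul_eq_zero.mp ?_).resolve_left hne
    linear_combination (α * (α' ^ 2 + β' ^ 2)) * h1 - (β * (β' ^ 2 - α' ^ 2)) * h2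
  have hp : (α ^ 2 + β ^ 2) * (α' ^ 2 + β' ^ 2) = 2 * (β * β') * (β * β' + α * α') := by
    linear_combination hc
  have hm : (α ^ 2 - β ^ 2) * (α' ^ 2 - β' ^ 2) = 2 * (α * α') * (α * α' - β * β') := by
    linear_combination -hc
  have hne : α' * β' ≠ 0 := by positivity
  refine mul_left_cancel₀ hne ?_
  calc α' * β' * (α ^ 4 - β ^ 4) ^ 2
      = (α' * (α ^ 2 + β ^ 2)) * (β' * (α ^ 2 - β ^ 2)) * (α ^ 4 - β ^ 4) := by ring
    _ = -(α * β) * ((α ^ 2 + β ^ 2) * (α' ^ 2 + β' ^ 2)) *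
          ((α ^ 2 - β ^ 2) * (α' ^ 2 - β' ^ 2)) := by rw [h1, h2]; ring
    _ = _ := by rw [hp, hm]; ring

lemma sq_sub_sq_sq_of_theta_relations {E G E' G' x x' y y' T W e g t : ℝ} (hE : 0 < E) (hG : 0 < G)
    (hE' : 0 < E') (hG' : 0 < G') (hx : 0 < x) (hx' : 0 < x') (hy : 0 < y) (hy' : 0 < y')
    (he : 0 < e) (hg : 0 < g) (hEE : E * E' = e ^ 2) (hGG : G * G' = g ^ 2)
    (hxT : x ^ 2 = G * T) (hxT' : x' ^ 2 = G' * T) (hyW : y ^ 2 = E * W) (hyW' : y' ^ 2 = E' * W)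
    (h1 : E = g + 2 * (t * x)) (h1' : E' = g + 2 * (-t * x'))
    (h2 : G = e + 2 * (t ^ 2 * y)) (h2' : G' = e + 2 * (t ^ 2 * y')) :
    (E ^ 2 - G ^ 2) ^ 2 = 4 * (g ^ 2 - e ^ 2) * E * G := by
  obtain ⟨α, hα, rfl⟩ : ∃ α, 0 < α ∧ α ^ 2 = E := ⟨√E, sqrt_pos.mpr hE, sq_sqrt hE.le⟩
  obtain ⟨β, hβ, rfl⟩ : ∃ β, 0 < β ∧ β ^ 2 = G := ⟨√G, sqrt_pos.mpr hG, sq_sqrt hG.le⟩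
  obtain ⟨α', hα', rfl⟩ : ∃ α, 0 < α ∧ α ^ 2 = E' := ⟨√E', sqrt_pos.mpr hE', sq_sqrt hE'.le⟩
  obtain ⟨β', hβ', rfl⟩ : ∃ β, 0 < β ∧ β ^ 2 = G' := ⟨√G', sqrt_pos.mpr hG', sq_sqrt hG'.le⟩
  have sq_inj : ∀ {a b : ℝ}, 0 < a → 0 < b → a ^ 2 = b ^ 2 → a = b := fun ha hb h =>
    (pow_left_inj₀ ha.le hb.le two_ne_zero).mp h
  have he' : α * α' = e := sq_inj (by positivity) he (by rw [mul_pow, hEE])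
  have hg' : β * β' = g := sq_inj (by positivity) hg (by rw [mul_pow, hGG])
  have hxx : x * β' = x' * β := sq_inj (by positivity) (by positivity)
    (by linear_combination β' ^ 2 * hxT - β ^ 2 * hxT')
  have hyy : y * α' = y' * α := sq_inj (by positivity) (by positivity)
    (by linear_combination α' ^ 2 * hyW - α ^ 2 * hyW')
  subst he' hg'
  have := mul_sub_pow_four_of_cross hα hβ hα' hβ'
    (by linear_combination β' * h1 + β * h1' + 2 * t * hxx)
    (by linear_combination α' * h2 - α * h2' + 2 * t ^ 2 * hyy)
  linear_combination this

/-- The difference `φ(q)²φ(q¹⁵)² - φ(q³)²φ(q⁵)²`. -/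
noncomputable def fifteen (q : ℝ) : ℝ :=
  (phi q * phi (q ^ 15)) ^ 2 - (phi (q ^ 3) * phi (q ^ 5)) ^ 2

lemma fifteen_sq (hq0 : q ≠ 0) (hq1 : |q| < 1) :
    fifteen q ^ 2 =
      -4 * fifteen (-q ^ 2) * (phi q * phi (q ^ 15)) * (phi (q ^ 3) * phi (q ^ 5)) := by
  have hn0 := neg_ne_zero.mpr hq0
  have hn1 : |(-q)| < 1 := by rwa [abs_neg]
  have mem : ∀ {n : ℕ}, n ≠ 0 → q ^ n ≠ 0 ∧ |q ^ n| < 1 := fun hn =>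
    ⟨pow_ne_zero _ hq0, abs_pow_lt_one hq1 hn⟩
  have pp : ∀ {n : ℕ}, n ≠ 0 → 0 < phi (q ^ n) := fun hn => phi_pos (mem hn).1 (mem hn).2
  have pn : ∀ {n : ℕ}, n ≠ 0 → 0 < phi (-q ^ n) := fun hn =>
    phi_pos (neg_pow_mem hq0 hq1 hn).1 (neg_pow_mem hq0 hq1 hn).2
  have tp : ∀ {n : ℕ}, n ≠ 0 → 0 < theta 1 2 1 (q ^ n) := fun hn =>
    theta_two_one_pos (mem hn).1 (mem hn).2
  have tn : ∀ {n : ℕ}, n ≠ 0 → 0 < theta 1 2 1 (-q ^ n) := fun hn =>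
    theta_two_one_pos (neg_pow_mem hq0 hq1 hn).1 (neg_pow_mem hq0 hq1 hn).2
  have hmul : ∀ {n : ℕ}, n ≠ 0 → phi (q ^ n) * phi (-q ^ n) = phi (-q ^ (n * 2)) ^ 2 := fun hn => by
    rw [phi_mul_phi_neg (mem hn).1 (mem hn).2, ← pow_mul]
  have hsq : ∀ {n : ℕ}, n ≠ 0 → theta 1 2 1 (q ^ n) ^ 2 = phi (q ^ n) * theta 1 2 1 (q ^ (n * 2)) :=
    fun hn => by rw [theta_two_one_sq (mem hn).1 (mem hn).2, ← pow_mul]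
  have hsqn : ∀ {n : ℕ}, n ≠ 0 →
      theta 1 2 1 (-q ^ n) ^ 2 = phi (-q ^ n) * theta 1 2 1 (q ^ (n * 2)) := fun hn => by
    rw [theta_two_one_sq (neg_pow_mem hq0 hq1 hn).1 (neg_pow_mem hq0 hq1 hn).2, neg_sq, ← pow_mul]
  have h1 := phi_mul_phi_pow_fifteen hq0 hq1
  have h1' := phi_mul_phi_pow_fifteen hn0 hn1
  have h2 := phi_pow_three_mul_phi_pow_five hq0 hq1
  have h2' := phi_pow_three_mul_phi_pow_five hn0 hn1
  rw [show (-q) ^ 15 = -q ^ 15 by ring, show (-q) ^ 6 = q ^ 6 by ring,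
    show (-q) ^ 10 = q ^ 10 by ring, show (-q) ^ 3 = -q ^ 3 by ring,
    show (-q) ^ 5 = -q ^ 5 by ring] at h1'
  rw [show (-q) ^ 15 = -q ^ 15 by ring, show (-q) ^ 30 = q ^ 30 by ring, neg_sq,
    show (-q) ^ 3 = -q ^ 3 by ring, show (-q) ^ 5 = -q ^ 5 by ring] at h2'
  have key := sq_sub_sq_sq_of_theta_relations (E := phi q * phi (q ^ 15))
    (G := phi (q ^ 3) * phi (q ^ 5)) (E' := phi (-q) * phi (-q ^ 15))
    (G' := phi (-q ^ 3) * phi (-q ^ 5)) (T := theta 1 2 1 (q ^ 6) * theta 1 2 1 (q ^ 10))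
    (W := theta 1 2 1 (q ^ 2) * theta 1 2 1 (q ^ 30))
    (mul_pos (phi_pos hq0 hq1) (pp (by norm_num))) (mul_pos (pp (by norm_num)) (pp (by norm_num)))
    (mul_pos (phi_pos hn0 hn1) (pn (by norm_num))) (mul_pos (pn (by norm_num)) (pn (by norm_num)))
    (mul_pos (tp (by norm_num)) (tp (by norm_num))) (mul_pos (tn (by norm_num)) (tn (by norm_num)))
    (mul_pos (theta_two_one_pos hq0 hq1) (tp (by norm_num)))
    (mul_pos (theta_two_one_pos hn0 hn1) (tn (by norm_num)))
    (mul_pos (pn (by norm_num)) (pn (by norm_num))) (mul_pos (pn (by norm_num)) (pn (by norm_num)))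
    (by rw [mul_mul_mul_comm, phi_mul_phi_neg hq0 hq1, hmul (by norm_num), mul_pow])
    (by rw [mul_mul_mul_comm, hmul (by norm_num), hmul (by norm_num), mul_pow])
    (by rw [mul_pow, hsq (by norm_num), hsq (by norm_num), mul_mul_mul_comm])
    (by rw [mul_pow, hsqn (by norm_num), hsqn (by norm_num), mul_mul_mul_comm])
    (by rw [mul_pow, theta_two_one_sq hq0 hq1, hsq (by norm_num), mul_mul_mul_comm])
    (by rw [mul_pow, theta_two_one_sq hn0 hn1, neg_sq, hsqn (by norm_num), mul_mul_mul_comm])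
    h1 h1' h2 h2'
  unfold fifteen
  rw [show (-q ^ 2) ^ 15 = -q ^ 30 by ring, show (-q ^ 2) ^ 3 = -q ^ 6 by ring,
    show (-q ^ 2) ^ 5 = -q ^ 10 by ring]
  rw [key]
  ring

lemma hasDerivAt_fifteen_zero : HasDerivAt fifteen 4 0 := by
  have h3 := hasDerivAt_phi_pow_zero (n := 3) (by norm_num)
  have h5 := hasDerivAt_phi_pow_zero (n := 5) (by norm_num)
  have h15 := hasDerivAt_phi_pow_zero (n := 15) (by norm_num)
  have h := ((hasDerivAt_phi_zero.fun_mul h15).fun_pow 2).fun_sub ((h3.fun_mul h5).fun_pow 2)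
  norm_num [phi_zero] at h
  exact h

lemma fifteen_zero : fifteen 0 = 0 := by simp [fifteen]

/-- The quotient which the degree fifteen relation shows to be identically `1`. -/
noncomputable def fifteenRatio (q : ℝ) : ℝ :=
  fifteen q ^ 4 / ((phi q * phi (q ^ 15)) ^ 2 * (phi (q ^ 3) * phi (q ^ 5)) ^ 2 *
    (quintic q * quintic (q ^ 3)))

lemma tendsto_div_self_of_hasDerivAt {f : ℝ → ℝ} {c : ℝ} (h : HasDerivAt f c 0) (h0 : f 0 = 0) :
    Tendsto (fun q => f q / q) (𝓝[≠] 0) (𝓝 c) := by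
  have := hasDerivAt_iff_tendsto_slope_zero.mp h
  simpa [h0, div_eq_inv_mul] using this

lemma tendsto_fifteenRatio : Tendsto fifteenRatio (𝓝[≠] 0) (𝓝 1) := by
  have hF := tendsto_div_self_of_hasDerivAt hasDerivAt_fifteen_zero fifteen_zero
  have hU := tendsto_div_self_of_hasDerivAt hasDerivAt_quintic_zero quintic_zero
  have h3 : Tendsto (fun q : ℝ => q ^ 3) (𝓝[≠] 0) (𝓝[≠] 0) :=
    tendsto_nhdsWithin_iff.mpr ⟨((continuous_pow 3).tendsto' 0 0 (by norm_num)).mono_left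
      nhdsWithin_le_nhds, by filter_upwards [self_mem_nhdsWithin] with q hq using pow_ne_zero 3 hq⟩
  have hphi : Tendsto phi (𝓝[≠] 0) (𝓝 1) := by
    have := hasDerivAt_phi_zero.continuousAt.tendsto
    rw [phi_zero] at this
    exact this.mono_left nhdsWithin_le_nhds
  have hpow : ∀ n : ℕ, 2 ≤ n → Tendsto (fun q => phi (q ^ n)) (𝓝[≠] 0) (𝓝 1) := fun n hn => by
    have := (hasDerivAt_phi_pow_zero hn).continuousAt.tendsto
    rw [zero_pow (by omega), phi_zero] at this
    exact this.mono_left nhdsWithin_le_nhds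
  have h := (hF.pow 4).div ((((hphi.mul (hpow 15 (by norm_num))).pow 2).mul
    (((hpow 3 (by norm_num)).mul (hpow 5 (by norm_num))).pow 2)).mul (hU.mul (hU.comp h3)))
    (by norm_num)
  norm_num at h
  refine h.congr' ?_
  filter_upwards [self_mem_nhdsWithin] with q hq
  have hq : q ≠ 0 := hq
  simp only [fifteenRatio, Pi.div_apply]
  field_simp

lemma fifteenRatio_sq (hq0 : q ≠ 0) (hq1 : |q| < 1) :
    fifteenRatio q ^ 2 = fifteenRatio (-q ^ 2) := by
  have hF := fifteen_sq hq0 hq1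
  have hU := quintic_sq hq0 hq1
  have hU3 := quintic_sq (pow_ne_zero 3 hq0) (abs_pow_lt_one hq1 (by norm_num))
  rw [← pow_mul, ← pow_mul, show (3 : ℕ) * 2 = 6 by rfl, show (3 : ℕ) * 10 = 30 by rfl] at hU3
  have mem : ∀ {n : ℕ}, n ≠ 0 → q ^ n ≠ 0 ∧ |q ^ n| < 1 := fun hn =>
    ⟨pow_ne_zero _ hq0, abs_pow_lt_one hq1 hn⟩
  have pp : ∀ {n : ℕ}, n ≠ 0 → phi (q ^ n) ≠ 0 := fun hn => (phi_pos (mem hn).1 (mem hn).2).ne'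
  have pn : ∀ {n : ℕ}, n ≠ 0 → phi (-q ^ n) ≠ 0 := fun hn =>
    (phi_pos (neg_pow_mem hq0 hq1 hn).1 (neg_pow_mem hq0 hq1 hn).2).ne'
  have un : ∀ {n : ℕ}, n ≠ 0 → quintic (-q ^ n) ≠ 0 := fun hn =>
    quintic_ne_zero (neg_pow_mem hq0 hq1 hn).1 (neg_pow_mem hq0 hq1 hn).2
  have := (phi_pos hq0 hq1).ne'
  have := pp (n := 3) (by norm_num)
  have := pp (n := 5) (by norm_num)
  have := pp (n := 15) (by norm_num)
  have := pn (n := 2) (by norm_num)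
  have := pn (n := 6) (by norm_num)
  have := pn (n := 10) (by norm_num)
  have := pn (n := 30) (by norm_num)
  have := un (n := 2) (by norm_num)
  have := un (n := 6) (by norm_num)
  unfold fifteenRatio
  rw [div_pow, mul_pow, mul_pow (quintic q), hU, hU3,
    show (fifteen q ^ 4) ^ 2 = (fifteen q ^ 2) ^ 4 by ring, hF,
    show (-q ^ 2) ^ 15 = -q ^ 30 by ring,
    show (-q ^ 2) ^ 3 = -q ^ 6 by ring, show (-q ^ 2) ^ 5 = -q ^ 10 by ring]
  field_simp
  ring

lemma fifteenRatio_eq_one (hq0 : q ≠ 0) (hq1 : |q| < 1) : fifteenRatio q = 1 := by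
  refine eq_of_abs_sub_nonpos (le_of_forall_pos_le_add fun ε hε => ?_)
  rw [zero_add]
  refine neg_sq_induction (P := fun q => |fifteenRatio q - 1| ≤ ε) ?_ (fun q hq0 hq1 h => ?_)
    hq0 hq1
  · filter_upwards [tendsto_fifteenRatio (Metric.closedBall_mem_nhds 1 hε)] with q hq
    simpa [Real.dist_eq] using hq
  · have hpos : 0 ≤ fifteenRatio q := by
      have := quintic_mul_quintic_pow_three_pos hq0 hq1
      unfold fifteenRatio
      positivity
    rw [← fifteenRatio_sq hq0 hq1, show fifteenRatio q ^ 2 - 1 =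
      (fifteenRatio q - 1) * (fifteenRatio q + 1) by ring, abs_mul,
      abs_of_nonneg (by linarith : 0 ≤ fifteenRatio q + 1)] at h
    nlinarith [abs_nonneg (fifteenRatio q - 1)]

end Fifteen

section Elimination

variable {v y z : ℝ}

lemma linear_of_modular_relations (hA : (1 - v) * y ^ 2 + 4 * v * y + v ^ 2 - 5 * v = 0)
    (hB : (y - z) ^ 4 = y * z * ((y - 1) * (5 - y)) * ((z - 1) * (5 - z))) :
    (-25 * z + 30 * z ^ 2 - 9 * z ^ 3 - 90 * v * z + 60 * v * z ^ 2 - 2 * v * z ^ 3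
    - 40 * v ^ 2 + 120 * v ^ 2 * z - 120 * v ^ 2 * z ^ 2 + 16 * v ^ 2 * z ^ 3 - 16 * v ^ 3
    - 14 * v ^ 3 * z + 36 * v ^ 3 * z ^ 2 - 6 * v ^ 3 * z ^ 3 - 8 * v ^ 4 + 9 * v ^ 4 * z
    - 6 * v ^ 4 * z ^ 2 + v ^ 4 * z ^ 3) * y +
    (z ^ 4 + 150 * v * z - 150 * v * z ^ 2 + 30 * v * z ^ 3 - 3 * v * z ^ 4 + 25 * v ^ 2
    - 150 * v ^ 2 * z + 210 * v ^ 2 * z ^ 2 - 46 * v ^ 2 * z ^ 3 + 3 * v ^ 2 * z ^ 4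
    + 45 * v ^ 3 - 6 * v ^ 3 * z - 66 * v ^ 3 * z ^ 2 + 18 * v ^ 3 * z ^ 3 - v ^ 3 * z ^ 4
    - 5 * v ^ 4 + 6 * v ^ 4 * z + 6 * v ^ 4 * z ^ 2 - 2 * v ^ 4 * z ^ 3 - v ^ 5) = 0 := by
  linear_combination (1 - v) ^ 3 * hB -
    (30 * z - 30 * z ^ 2 + 6 * z ^ 3 - 9 * y * z + 6 * y * z ^ 2 - y * z ^ 3 + y ^ 2
    + 5 * v - 24 * v * z + 36 * v * z ^ 2 - 8 * v * z ^ 3 - 4 * v * y + 18 * v * y * z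
    - 12 * v * y * z ^ 2 + 2 * v * y * z ^ 3 - 2 * v * y ^ 2 + 10 * v ^ 2 - 6 * v ^ 2 * z
    - 6 * v ^ 2 * z ^ 2 + 2 * v ^ 2 * z ^ 3 + 4 * v ^ 2 * y - 9 * v ^ 2 * y * z
    + 6 * v ^ 2 * y * z ^ 2 - v ^ 2 * y * z ^ 3 + v ^ 2 * y ^ 2 + v ^ 3) * hA

/-- Elimination of `y` between the relations of degree five and fifteen. -/
lemma eliminant_eq_zero (hv : v ≠ 1) (hA : (1 - v) * y ^ 2 + 4 * v * y + v ^ 2 - 5 * v = 0)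
    (hB : (y - z) ^ 4 = y * z * ((y - 1) * (5 - y)) * ((z - 1) * (5 - z))) :
    z ^ 8 - 3125 * v * z ^ 2 + 7500 * v * z ^ 3 - 6750 * v * z ^ 4 + 3100 * v * z ^ 5
    - 825 * v * z ^ 6 + 96 * v * z ^ 7 - 4 * v * z ^ 8 + 6250 * v ^ 2 * z ^ 2
    - 15000 * v ^ 2 * z ^ 3 + 12450 * v ^ 2 * z ^ 4 - 4680 * v ^ 2 * z ^ 5
    + 1146 * v ^ 2 * z ^ 6 - 144 * v ^ 2 * z ^ 7 + 6 * v ^ 2 * z ^ 8 - 4875 * v ^ 3 * z ^ 2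
    + 12900 * v ^ 3 * z ^ 3 - 10530 * v ^ 3 * z ^ 4 + 2868 * v ^ 3 * z ^ 5
    - 479 * v ^ 3 * z ^ 6 + 64 * v ^ 3 * z ^ 7 - 4 * v ^ 3 * z ^ 8 + 625 * v ^ 4
    - 2000 * v ^ 4 * z + 4700 * v ^ 4 * z ^ 2 - 8480 * v ^ 4 * z ^ 3 + 6748 * v ^ 4 * z ^ 4
    - 1696 * v ^ 4 * z ^ 5 + 188 * v ^ 4 * z ^ 6 - 16 * v ^ 4 * z ^ 7 + v ^ 4 * z ^ 8
    - 500 * v ^ 5 + 1600 * v ^ 5 * z - 2395 * v ^ 5 * z ^ 2 + 2868 * v ^ 5 * z ^ 3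
    - 2106 * v ^ 5 * z ^ 4 + 516 * v ^ 5 * z ^ 5 - 39 * v ^ 5 * z ^ 6 + 150 * v ^ 6
    - 720 * v ^ 6 * z + 1146 * v ^ 6 * z ^ 2 - 936 * v ^ 6 * z ^ 3 + 498 * v ^ 6 * z ^ 4
    - 120 * v ^ 6 * z ^ 5 + 10 * v ^ 6 * z ^ 6 - 20 * v ^ 7 + 96 * v ^ 7 * z
    - 165 * v ^ 7 * z ^ 2 + 124 * v ^ 7 * z ^ 3 - 54 * v ^ 7 * z ^ 4 + 12 * v ^ 7 * z ^ 5
    - v ^ 7 * z ^ 6 + v ^ 8 = 0 := by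
  have resultant : ∀ {s t : ℝ}, s * y + t = 0 →
      (1 - v) * t ^ 2 - 4 * v * t * s + (v ^ 2 - 5 * v) * s ^ 2 = 0 := fun {s t} h => by
    linear_combination s ^ 2 * hA + ((1 - v) * (t - s * y) - 4 * v * s) * h
  have hv' : (1 - v) ^ 3 ≠ 0 := pow_ne_zero 3 (sub_ne_zero.mpr hv.symm)
  refine (mul_eq_zero.mp ?_).resolve_left hv'
  linear_combination resultant (linear_of_modular_relations hA hB)

end Elimination

section Relations

variable {q : ℝ}

lemma degree_five_relation (hq0 : q ≠ 0) (hq1 : |q| < 1) :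
    (1 - (phi (-q) / phi (-q ^ 5)) ^ 2) * ((phi (-q ^ 2) / phi (-q ^ 10)) ^ 2) ^ 2 +
      4 * (phi (-q) / phi (-q ^ 5)) ^ 2 * (phi (-q ^ 2) / phi (-q ^ 10)) ^ 2 +
      ((phi (-q) / phi (-q ^ 5)) ^ 2) ^ 2 - 5 * (phi (-q) / phi (-q ^ 5)) ^ 2 = 0 := by
  have h := phi_sub_mul_neg hq0 hq1
  have hd := phi_mul_phi_neg hq0 hq1
  have hD := phi_pow_five_mul_neg hq0 hq1
  have p5 := (phi_pos (pow_ne_zero 5 hq0) (abs_pow_lt_one hq1 (by norm_num))).ne'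
  have hn5 := neg_pow_mem hq0 hq1 (n := 5) (by norm_num)
  have p5' := (phi_pos hn5.1 hn5.2).ne'
  rw [div_pow _ (phi (-q ^ 10)), ← hd, ← hD]
  rw [← hd, ← hD] at h
  field_simp
  linear_combination -phi (-q) ^ 2 * h

lemma degree_fifteen_relation (hq0 : q ≠ 0) (hq1 : |q| < 1) :
    ((phi q / phi (q ^ 5)) ^ 2 - (phi (q ^ 3) / phi (q ^ 15)) ^ 2) ^ 4 =
      (phi q / phi (q ^ 5)) ^ 2 * (phi (q ^ 3) / phi (q ^ 15)) ^ 2 *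
      (((phi q / phi (q ^ 5)) ^ 2 - 1) * (5 - (phi q / phi (q ^ 5)) ^ 2)) *
      (((phi (q ^ 3) / phi (q ^ 15)) ^ 2 - 1) * (5 - (phi (q ^ 3) / phi (q ^ 15)) ^ 2)) := by
  have pp : ∀ {n : ℕ}, n ≠ 0 → phi (q ^ n) ≠ 0 := fun hn =>
    (phi_pos (pow_ne_zero _ hq0) (abs_pow_lt_one hq1 hn)).ne'
  have p1 := (phi_pos hq0 hq1).ne'
  have p3 := pp (n := 3) (by norm_num)
  have p5 := pp (n := 5) (by norm_num)
  have p15 := pp (n := 15) (by norm_num)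
  have hU := (quintic_mul_quintic_pow_three_pos hq0 hq1).ne'
  have h := fifteenRatio_eq_one hq0 hq1
  unfold fifteenRatio at h
  rw [div_eq_one_iff_eq (by positivity)] at h
  unfold fifteen quintic at h
  rw [← pow_mul q 3 5, show (3 : ℕ) * 5 = 15 by rfl] at h
  field_simp
  linear_combination h

lemma phi_div_phi_sq_ne_one (hq0 : q ≠ 0) (hq1 : |q| < 1) : (phi q / phi (q ^ 5)) ^ 2 ≠ 1 := by
  intro h
  refine quintic_ne_zero hq0 hq1 ?_
  have p5 := (phi_pos (pow_ne_zero 5 hq0) (abs_pow_lt_one hq1 (by norm_num))).ne'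
  rw [div_pow, div_eq_one_iff_eq (pow_ne_zero 2 p5)] at h
  rw [quintic, h, sub_self, zero_mul]

end Relations

theorem stmt_0 (q M N : ℝ) (hq0 : 0 < q) (hq1 : q < 1)
    (hM : M = phi (-q) / phi (-(q ^ 5)))
    (hN : N = phi (-(q ^ 6)) / phi (-(q ^ 30))) :
    (M ^ 8 / N ^ 8 + N ^ 8 / M ^ 8) + 96 * (M ^ 6 / N ^ 6 + N ^ 6 / M ^ 6)
      + 1146 * (M ^ 4 / N ^ 4 + N ^ 4 / M ^ 4) + 2868 * (M ^ 2 / N ^ 2 + N ^ 2 / M ^ 2)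
      + (N ^ 8 + 5 ^ 4 / N ^ 8) - 16 * (N ^ 6 + 5 ^ 3 / N ^ 6)
      + 188 * (N ^ 4 + 5 ^ 2 / N ^ 4) - 1696 * (N ^ 2 + 5 / N ^ 2)
      - 54 * (M ^ 6 + 5 ^ 3 / M ^ 6) + 498 * (M ^ 4 + 5 ^ 2 / M ^ 4)
      - 2106 * (M ^ 2 + 5 / M ^ 2)
      - 4 * (N ^ 8 / M ^ 6 + 5 * M ^ 6 / N ^ 8)
      + 6 * (N ^ 8 / M ^ 4 + 5 ^ 2 * M ^ 4 / N ^ 8)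
      - 4 * (N ^ 8 / M ^ 2 + 5 ^ 3 * M ^ 2 / N ^ 8)
      - 144 * (N ^ 6 / M ^ 4 + 5 * M ^ 4 / N ^ 6)
      + 64 * (N ^ 6 / M ^ 2 + 5 ^ 2 * M ^ 2 / N ^ 6)
      - 479 * (N ^ 4 / M ^ 2 + 5 * M ^ 2 / N ^ 4)
      - 165 * (M ^ 6 / N ^ 4 + 5 * N ^ 4 / M ^ 6)
      + 124 * (M ^ 6 / N ^ 2 + 5 ^ 2 * N ^ 2 / M ^ 6)
      - 936 * (M ^ 4 / N ^ 2 + 5 * N ^ 2 / M ^ 4)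
      + 10 * (M ^ 4 * N ^ 4 + 5 ^ 4 / (M ^ 4 * N ^ 4))
      + 516 * (M ^ 2 * N ^ 2 + 5 ^ 2 / (M ^ 2 * N ^ 2))
      - 39 * (M ^ 2 * N ^ 4 + 5 ^ 3 / (M ^ 2 * N ^ 4))
      - 120 * (M ^ 4 * N ^ 2 + 5 ^ 3 / (M ^ 4 * N ^ 2))
      + 12 * (M ^ 6 * N ^ 2 + 5 ^ 4 / (M ^ 6 * N ^ 2))
      - (M ^ 6 * N ^ 4 + 5 ^ 5 / (M ^ 6 * N ^ 4)) + 6748 = 0 := by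
  have hq0' : q ≠ 0 := hq0.ne'
  have hq1' : |q| < 1 := by rwa [abs_of_pos hq0]
  have pn : ∀ {n : ℕ}, n ≠ 0 → 0 < phi (-q ^ n) := fun hn =>
    phi_pos (neg_pow_mem hq0' hq1' hn).1 (neg_pow_mem hq0' hq1' hn).2
  have pm : 0 < phi (-q) := phi_pos (neg_ne_zero.mpr hq0') (by rwa [abs_neg])
  have hM0 : M ≠ 0 := hM ▸ (div_pos pm (pn (by norm_num))).ne'
  have hN0 : N ≠ 0 := hN ▸ (div_pos (pn (by norm_num)) (pn (by norm_num))).ne'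
  have hv : M ^ 2 ≠ 1 := by
    have := phi_div_phi_sq_ne_one (neg_ne_zero.mpr hq0') (by rwa [abs_neg])
    rwa [show (-q) ^ 5 = -q ^ 5 by ring, ← hM] at this
  have hA := degree_five_relation hq0' hq1'
  obtain ⟨hn0, hn1⟩ := neg_pow_mem hq0' hq1' two_ne_zero
  have hB := degree_fifteen_relation hn0 hn1
  rw [show (-q ^ 2) ^ 15 = -q ^ 30 by ring, show (-q ^ 2) ^ 3 = -q ^ 6 by ring,
    show (-q ^ 2) ^ 5 = -q ^ 10 by ring, ← hN] at hB
  rw [← hM] at hA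
  have h := eliminant_eq_zero hv hA hB
  field_simp
  linear_combination h
end

section
/- Let 0 < q < 1 and set V := ψ^2(q)/(q ψ^2(q^5)). If V > 1, then f^2(-q) f^2(-q^2) / (q f^2(-q^5) f^2(-q^10)) = V(V-5)/(V-1). -/
open Real

open Filter Topology Finset

/-- The finite `q`-factorial `∏_{i=1}^n (1 - q^i)`. -/
noncomputable def qFac (q : ℂ) (n : ℕ) : ℂ := ∏ i ∈ range n, (1 - q ^ (i + 1))

/-- The reciprocal of `qFac`, extended by zero to negative integers. -/
noncomputable def qFacInv (q : ℂ) (m : ℤ) : ℂ := if 0 ≤ m then (qFac q m.toNat)⁻¹ else 0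

/-- Euler's product `∏_{i ≥ 1} (1 - q^i)`. -/
noncomputable def eulerProd (q : ℂ) : ℂ := ∏' i : ℕ, (1 - q ^ (i + 1))

/-- The triangular number `j (j + 1) / 2` of an integer. -/
def tri (j : ℤ) : ℤ := j * (j + 1) / 2

/-- The bilateral theta series `∑_j q^(j(j+1)/2) z^j`. -/
noncomputable def thetaSeries (q z : ℂ) : ℂ := ∑' j : ℤ, q ^ tri j * z ^ j

lemma two_mul_tri (j : ℤ) : 2 * tri j = j * (j + 1) :=
  Int.two_mul_ediv_two_of_even (Int.even_mul_succ_self j)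

lemma tri_add_one (j : ℤ) : tri (j + 1) = tri j + (j + 1) := by
  have h := two_mul_tri j
  have h' := two_mul_tri (j + 1)
  linarith

lemma tri_neg_add_one (j : ℤ) : tri (-(j + 1)) = tri j := by
  have h := two_mul_tri j
  have h' := two_mul_tri (-(j + 1))
  linarith

lemma one_sub_pow_ne_zero {q : ℂ} (hq : ‖q‖ < 1) {n : ℕ} (hn : n ≠ 0) : 1 - q ^ n ≠ 0 := by
  intro h
  have h1 : ‖q ^ n‖ = 1 := by rw [← sub_eq_zero.mp h, norm_one]
  rw [norm_pow] at h1
  exact (pow_lt_one₀ (norm_nonneg q) hq hn).ne h1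

lemma norm_pow_lt_one {q : ℂ} (hq : ‖q‖ < 1) {n : ℕ} (hn : n ≠ 0) : ‖q ^ n‖ < 1 := by
  rw [norm_pow]
  exact pow_lt_one₀ (norm_nonneg q) hq hn

lemma qFac_ne_zero {q : ℂ} (hq : ‖q‖ < 1) (n : ℕ) : qFac q n ≠ 0 :=
  prod_ne_zero_iff.mpr fun _ _ ↦ one_sub_pow_ne_zero hq (Nat.succ_ne_zero _)

lemma tendsto_qFac {q : ℂ} (hq : ‖q‖ < 1) : Tendsto (qFac q) atTop (𝓝 (eulerProd q)) :=
  (ModularForm.multipliable_one_sub_pow hq).tendsto_prod_tprod_nat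

lemma eulerProd_ne_zero {q : ℂ} (hq : ‖q‖ < 1) : eulerProd q ≠ 0 := by
  have h := tprod_one_add_ne_zero_of_summable (f := fun n : ℕ ↦ -q ^ (n + 1)) ?_ ?_
  · simpa [eulerProd, sub_eq_add_neg] using h
  · intro i
    simpa [sub_eq_add_neg] using one_sub_pow_ne_zero hq (Nat.succ_ne_zero i)
  · simpa using (summable_nat_add_iff 1).mpr (summable_geometric_of_lt_one (norm_nonneg _) hq)

lemma qFacInv_sub_one {q : ℂ} (hq : ‖q‖ < 1) (m : ℤ) :
    qFacInv q (m - 1) = (1 - q ^ m) * qFacInv q m := by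
  rcases lt_trichotomy m 0 with h | rfl | h
  · rw [qFacInv, qFacInv, if_neg (by omega), if_neg (by omega), mul_zero]
  · simp [qFacInv]
  · obtain ⟨n, rfl⟩ : ∃ n : ℕ, m = n + 1 := ⟨(m - 1).toNat, by omega⟩
    have h1 := one_sub_pow_ne_zero hq (Nat.succ_ne_zero n)
    have h2 := qFac_ne_zero hq n
    have h3 : qFac q (n + 1) = qFac q n * (1 - q ^ (n + 1)) := prod_range_succ _ _
    have h4 : (n + 1 : ℤ) = ((n + 1 : ℕ) : ℤ) := by push_cast; rfl
    rw [add_sub_cancel_right, h4, qFacInv, qFacInv, if_pos (Int.natCast_nonneg _),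
      if_pos (Int.natCast_nonneg _), Int.toNat_natCast, Int.toNat_natCast, h3, zpow_natCast]
    rw [Nat.succ_eq_add_one] at h1
    field_simp

/-- The finite form of the Jacobi triple product identity. -/
lemma hasSum_finite_triple_product {q z : ℂ} (hq0 : q ≠ 0) (hq : ‖q‖ < 1) (hz : z ≠ 0) (N : ℕ) :
    HasSum (fun j : ℤ ↦ qFac q (2 * N) * qFacInv q (N + j) * qFacInv q (N - j)
      * (q ^ tri j * z ^ j)) (∏ i ∈ range N, (1 + z * q ^ (i + 1)) * (1 + z⁻¹ * q ^ i)) := by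
  induction N with
  | zero =>
    convert hasSum_single (0 : ℤ) ?_ using 1
    · simp [qFac, qFacInv, tri]
    · intro j hj
      rcases lt_or_gt_of_ne hj with h | h
      · simp [qFacInv, not_le.mpr h]
      · simp [qFacInv, not_le.mpr h]
  | succ N ih =>
    set F : ℤ → ℂ := fun j ↦ qFac q (2 * N) * qFacInv q (N + j) * qFacInv q (N - j)
      * (q ^ tri j * z ^ j) with hF
    have hm := (Equiv.subRight (1 : ℤ)).hasSum_iff.mpr ih
    have hp := (Equiv.addRight (1 : ℤ)).hasSum_iff.mpr ih
    have h := ((ih.mul_left (1 + q ^ (2 * N + 1))).add (hm.mul_left (z * q ^ (N + 1)))).add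
      (hp.mul_left (z⁻¹ * q ^ N))
    rw [prod_range_succ]
    convert h using 1
    · rfl
    · funext j
      simp only [hF, Function.comp, Equiv.subRight_apply, Equiv.coe_addRight]
      have e1 : ((N + 1 : ℕ) : ℤ) + j = (N + 1 + j : ℤ) := by push_cast; ring
      have e2 : ((N + 1 : ℕ) : ℤ) - j = (N + 1 - j : ℤ) := by push_cast; ring
      have r1 := qFacInv_sub_one hq (N + 1 + j)
      have r2 := qFacInv_sub_one hq (N + 1 - j)
      have r3 := qFacInv_sub_one hq (N + j)
      have r4 := qFacInv_sub_one hq (N - j)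
      rw [show (N + 1 + j - 1 : ℤ) = N + j by ring] at r1
      rw [show (N + 1 - j - 1 : ℤ) = N - j by ring] at r2
      have hfac : qFac q (2 * (N + 1))
          = qFac q (2 * N) * (1 - q ^ (2 * N + 1)) * (1 - q ^ (2 * N + 2)) := by
        simp only [qFac, show 2 * (N + 1) = 2 * N + 1 + 1 by ring, prod_range_succ]
      have t1 : tri (j + 1) = tri j + (j + 1) := tri_add_one j
      have t2 : tri (j - 1) = tri j - j := by
        have := tri_add_one (j - 1)
        rw [sub_add_cancel] at this
        linarith
      rw [e1, e2, show (N + (j - 1) : ℤ) = N + j - 1 by ring,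
        show (N - (j - 1) : ℤ) = N + 1 - j by ring,
        show (N + (j + 1) : ℤ) = N + 1 + j by ring,
        show (N - (j + 1) : ℤ) = N - j - 1 by ring, r3, r4, r1, r2, hfac, t1, t2]
      simp only [zpow_add₀ hq0, zpow_sub₀ hq0, zpow_add₀ hz, zpow_sub₀ hz, zpow_natCast, zpow_one]
      have hj : q ^ j ≠ 0 := zpow_ne_zero _ hq0
      field_simp
      ring
    · have hzz : z * z⁻¹ = 1 := mul_inv_cancel₀ hz
      linear_combination (∏ i ∈ range N, (1 + z * q ^ (i + 1)) * (1 + z⁻¹ * q ^ i))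
        * q ^ (2 * N + 1) * hzz

lemma summable_theta {q : ℂ} (hq0 : q ≠ 0) (hq : ‖q‖ < 1) {z : ℂ} (hz : z ≠ 0) :
    Summable fun j : ℤ ↦ q ^ tri j * z ^ j := by
  have key : ∀ w : ℂ, w ≠ 0 → Summable fun n : ℕ ↦ q ^ tri n * w ^ n := by
    intro w hw
    refine summable_of_ratio_test_tendsto_lt_one (l := 0) one_pos
      (Eventually.of_forall fun n ↦ mul_ne_zero (zpow_ne_zero _ hq0) (pow_ne_zero _ hw)) ?_
    have h : Tendsto (fun n : ℕ ↦ ‖w‖ * ‖q‖ ^ (n + 1)) atTop (𝓝 (‖w‖ * 0)) :=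
      (((tendsto_pow_atTop_nhds_zero_of_lt_one (norm_nonneg q) hq).comp
        (tendsto_add_atTop_nat 1))).const_mul _
    rw [mul_zero] at h
    refine h.congr fun n ↦ ?_
    rw [← norm_div, ← norm_pow, ← norm_mul]
    congr 1
    have : q ^ tri n ≠ 0 := zpow_ne_zero _ hq0
    have e : q ^ tri ((n + 1 : ℕ) : ℤ) = q ^ tri n * q ^ (n + 1) := by
      push_cast
      rw [tri_add_one, zpow_add₀ hq0]
      norm_cast
    rw [e, pow_succ w]
    field_simp
  refine Summable.of_nat_of_neg_add_one (by simpa using key z hz) ?_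
  refine ((key z⁻¹ (inv_ne_zero hz)).mul_left z⁻¹).congr fun n ↦ ?_
  rw [tri_neg_add_one, zpow_neg, zpow_add₀ hz, zpow_natCast, inv_pow]
  simp only [zpow_one]
  field_simp

lemma tendsto_qFacInv {q : ℂ} (hq : ‖q‖ < 1) {u : ℕ → ℤ} (hu : Tendsto u atTop atTop) :
    Tendsto (fun N ↦ qFacInv q (u N)) atTop (𝓝 (eulerProd q)⁻¹) := by
  have h : Tendsto (fun N ↦ (qFac q (u N).toNat)⁻¹) atTop (𝓝 (eulerProd q)⁻¹) :=
    (((tendsto_qFac hq).inv₀ (eulerProd_ne_zero hq))).comp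
      ((tendsto_atTop.mpr fun b ↦ by
        filter_upwards [hu.eventually_ge_atTop (b : ℤ)] with N hN; omega))
  refine h.congr' ?_
  filter_upwards [hu.eventually_ge_atTop 0] with N hN
  simp [qFacInv, hN]

lemma exists_norm_qFacInv_le {q : ℂ} (hq : ‖q‖ < 1) : ∃ C, ∀ m, ‖qFacInv q m‖ ≤ C := by
  obtain ⟨C, hC⟩ := ((tendsto_qFac hq).inv₀ (eulerProd_ne_zero hq)).norm.bddAbove_range
  refine ⟨C, fun m ↦ ?_⟩
  have hC' : ∀ n, ‖(qFac q n)⁻¹‖ ≤ C := fun n ↦ hC ⟨n, rfl⟩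
  unfold qFacInv
  split_ifs
  · exact hC' _
  · simpa using (norm_nonneg _).trans (hC' 0)

/-- The **Jacobi triple product identity**. -/
theorem tendsto_triple_product {q z : ℂ} (hq0 : q ≠ 0) (hq : ‖q‖ < 1) (hz : z ≠ 0) :
    Tendsto (fun N ↦ ∏ i ∈ range N, (1 - q ^ (i + 1)) * (1 + z * q ^ (i + 1)) * (1 + z⁻¹ * q ^ i))
      atTop (𝓝 (thetaSeries q z)) := by
  obtain ⟨C, hC⟩ := exists_norm_qFacInv_le hq
  obtain ⟨D, hD⟩ := (tendsto_qFac hq).norm.bddAbove_range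
  have hD' : ∀ n, ‖qFac q n‖ ≤ D := fun n ↦ hD ⟨n, rfl⟩
  have hC0 : 0 ≤ C := (norm_nonneg _).trans (hC 0)
  have hD0 : 0 ≤ D := (norm_nonneg _).trans (hD' 0)
  have hE := eulerProd_ne_zero hq
  have hlim := tendsto_tsum_of_dominated_convergence (𝓕 := atTop)
    (f := fun (N : ℕ) (j : ℤ) ↦ qFac q (2 * N) * qFacInv q (N + j) * qFacInv q (N - j)
      * (q ^ tri j * z ^ j))
    (g := fun j ↦ eulerProd q * (eulerProd q)⁻¹ * (eulerProd q)⁻¹ * (q ^ tri j * z ^ j))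
    (bound := fun j ↦ D * C * C * ‖q ^ tri j * z ^ j‖)
    ((summable_theta hq0 hq hz).norm.mul_left _)
    (fun j ↦ by
      refine Tendsto.mul_const _ (((((tendsto_qFac hq).comp ?_)).mul
        (tendsto_qFacInv hq ?_)).mul (tendsto_qFacInv hq ?_))
      · exact tendsto_id.const_mul_atTop' two_pos
      · exact tendsto_atTop_add_const_right _ _ tendsto_natCast_atTop_atTop
      · exact tendsto_atTop_add_const_right _ _ tendsto_natCast_atTop_atTop)
    (Eventually.of_forall fun N j ↦ by
      rw [norm_mul, norm_mul, norm_mul]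
      gcongr
      exacts [hD' _, hC _, hC _])
  simp only [(hasSum_finite_triple_product hq0 hq hz _).tsum_eq, mul_inv_cancel₀ hE, one_mul,
    tsum_mul_left] at hlim
  have h := (tendsto_qFac hq).mul hlim
  rw [mul_inv_cancel_left₀ hE] at h
  refine h.congr fun N ↦ ?_
  rw [qFac, ← prod_mul_distrib]
  exact prod_congr rfl fun i _ ↦ by ring

/-- The Jacobi triple product identity, with the factor `1 + z⁻¹` taken out of the product. -/
theorem tendsto_triple_product' {q z : ℂ} (hq0 : q ≠ 0) (hq : ‖q‖ < 1) (hz : z ≠ 0) :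
    Tendsto (fun N ↦ (1 + z⁻¹) *
      ∏ i ∈ range N, (1 - q ^ (i + 1)) * (1 + z * q ^ (i + 1)) * (1 + z⁻¹ * q ^ (i + 1)))
      atTop (𝓝 (thetaSeries q z)) := by
  have h : Tendsto (fun N : ℕ ↦ 1 + z⁻¹ * q ^ N) atTop (𝓝 (1 + z⁻¹ * 0)) :=
    ((tendsto_pow_atTop_nhds_zero_of_norm_lt_one hq).const_mul _).const_add _
  have h' := (tendsto_triple_product hq0 hq hz).mul h
  rw [mul_zero, add_zero, mul_one] at h'
  refine h'.congr fun N ↦ ?_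
  have e := prod_range_succ' (fun i ↦ 1 + z⁻¹ * q ^ i) N
  rw [prod_range_succ, pow_zero, mul_one] at e
  simp only [prod_mul_distrib]
  linear_combination (∏ i ∈ range N, (1 - q ^ (i + 1))) * (∏ i ∈ range N, (1 + z * q ^ (i + 1))) * e

lemma one_sub_sq_pow (q : ℂ) (n : ℕ) : 1 - (q ^ 2) ^ n = (1 - q ^ n) * (1 + q ^ n) := by
  ring

/-- The **pentagonal number theorem**. -/
theorem tsum_pentagonal {q : ℂ} (hq0 : q ≠ 0) (hq : ‖q‖ < 1) :
    ∑' n : ℤ, (-1 : ℂ) ^ n * q ^ (n * (3 * n - 1) / 2) = eulerProd q := by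
  have hz : -(q ^ 2)⁻¹ ≠ 0 := neg_ne_zero.mpr (inv_ne_zero (pow_ne_zero 2 hq0))
  have h := tendsto_triple_product (pow_ne_zero 3 hq0) (norm_pow_lt_one hq three_ne_zero) hz
  have hE := (tendsto_qFac hq).comp (tendsto_id.const_mul_atTop' (three_pos : 0 < 3))
  have e : thetaSeries (q ^ 3) (-(q ^ 2)⁻¹)
      = ∑' n : ℤ, (-1 : ℂ) ^ n * q ^ (n * (3 * n - 1) / 2) := by
    refine tsum_congr fun n ↦ ?_
    have ht := two_mul_tri n
    rw [show n * (3 * n - 1) / 2 = 3 * tri n - 2 * n by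
      rw [show n * (3 * n - 1) = 2 * (3 * tri n - 2 * n) by linarith]; omega]
    rw [neg_eq_neg_one_mul, mul_zpow, inv_zpow, zpow_sub₀ hq0, zpow_mul, zpow_mul]
    norm_cast
    ring
  rw [← e]
  refine tendsto_nhds_unique (h.congr fun N ↦ ?_) hE
  simp only [Function.comp, id]
  induction N with
  | zero => simp [qFac]
  | succ N ih =>
    rw [prod_range_succ, ih]
    simp only [qFac, show 3 * (N + 1) = 3 * N + 1 + 1 + 1 by ring, prod_range_succ]
    rw [inv_neg, inv_inv,
      show -(q ^ 2)⁻¹ * (q ^ 3) ^ (N + 1) = -q ^ (3 * N + 1) by field_simp; ring]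
    ring

lemma thetaSeries_one_mul_eulerProd {q : ℂ} (hq0 : q ≠ 0) (hq : ‖q‖ < 1) :
    thetaSeries q 1 * eulerProd q = 2 * eulerProd (q ^ 2) ^ 2 := by
  have h := (tendsto_triple_product' hq0 hq one_ne_zero).mul (tendsto_qFac hq)
  have hE := ((tendsto_qFac (norm_pow_lt_one hq two_ne_zero)).pow 2).const_mul 2
  refine tendsto_nhds_unique (h.congr fun N ↦ ?_) hE
  simp only [qFac, one_sub_sq_pow, prod_mul_distrib, inv_one, one_mul]
  ring

lemma prod_range_five_mul (g : ℕ → ℂ) (N : ℕ) : ∏ i ∈ range (5 * N), g i =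
    ∏ i ∈ range N, g (5 * i) * g (5 * i + 1) * g (5 * i + 2) * g (5 * i + 3) * g (5 * i + 4) := by
  induction N with
  | zero => simp
  | succ N ih =>
    rw [prod_range_succ, ← ih, show 5 * (N + 1) = 5 * N + 1 + 1 + 1 + 1 + 1 by ring]
    simp only [prod_range_succ]
    ring

lemma thetaSeries_quintic_mul_eulerProd {q : ℂ} (hq0 : q ≠ 0) (hq : ‖q‖ < 1) :
    thetaSeries (q ^ 5) q⁻¹ * thetaSeries (q ^ 5) (q ^ 2)⁻¹ * (eulerProd q * eulerProd (q ^ 10))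
      = eulerProd (q ^ 2) * eulerProd (q ^ 5) ^ 3 := by
  have h50 := pow_ne_zero 5 hq0
  have h5 := norm_pow_lt_one hq (by norm_num : 5 ≠ 0)
  have hmul : Tendsto (fun N : ℕ ↦ 5 * N) atTop atTop :=
    tendsto_id.const_mul_atTop' (by norm_num : 0 < 5)
  have hL := ((tendsto_triple_product h50 h5 (inv_ne_zero hq0)).mul
    (tendsto_triple_product h50 h5 (inv_ne_zero (pow_ne_zero 2 hq0)))).mul
    (((tendsto_qFac hq).comp hmul).mul (tendsto_qFac (norm_pow_lt_one hq (by norm_num : 10 ≠ 0))))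
  have hR := ((tendsto_qFac (norm_pow_lt_one hq two_ne_zero)).comp hmul).mul
    ((tendsto_qFac h5).pow 3)
  refine tendsto_nhds_unique (hL.congr fun N ↦ ?_) hR
  simp only [Function.comp, qFac, one_sub_sq_pow, prod_range_five_mul]
  rw [← prod_mul_distrib, ← prod_mul_distrib, ← prod_mul_distrib, ← prod_pow, ← prod_mul_distrib]
  refine prod_congr rfl fun i _ ↦ ?_
  rw [inv_inv, inv_inv, show q⁻¹ * (q ^ 5) ^ (i + 1) = q ^ (5 * i + 3 + 1) by field_simp; ring,
    show (q ^ 2)⁻¹ * (q ^ 5) ^ (i + 1) = q ^ (5 * i + 2 + 1) by field_simp; ring,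
    show q * (q ^ 5) ^ i = q ^ (5 * i + 1) by ring,
    show q ^ 2 * (q ^ 5) ^ i = q ^ (5 * i + 1 + 1) by ring,
    show (q ^ 5) ^ (i + 1) = q ^ (5 * i + 4 + 1) by ring,
    show 1 - (q ^ 10) ^ (i + 1) = (1 - q ^ (5 * i + 4 + 1)) * (1 + q ^ (5 * i + 4 + 1)) by ring]
  rw [pow_three (1 - q ^ (5 * i + 4 + 1))]
  ac_rfl

lemma thetaSeries_root_of_unity_mul_eulerProd {q ζ : ℂ} (hq0 : q ≠ 0) (hq : ‖q‖ < 1)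
    (hζ : 1 + ζ + ζ ^ 2 + ζ ^ 3 + ζ ^ 4 = 0) :
    ζ ^ 2 * (thetaSeries q ζ * thetaSeries q (ζ ^ 2)⁻¹) * (eulerProd (q ^ 2) * eulerProd (q ^ 5))
      = -(eulerProd q ^ 3 * eulerProd (q ^ 10)) := by
  have hζ5 : ζ ^ 5 = 1 := by linear_combination (ζ - 1) * hζ
  have hζ0 : ζ ≠ 0 := by rintro rfl; simp at hζ5
  have hi : ζ⁻¹ = ζ ^ 4 := by field_simp; exact hζ5.symm
  have hi2 : (ζ ^ 2)⁻¹ = ζ ^ 3 := by field_simp; exact hζ5.symm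
  have h5 := norm_pow_lt_one hq (by norm_num : 5 ≠ 0)
  have h10 := norm_pow_lt_one hq (by norm_num : 10 ≠ 0)
  have hL := (((tendsto_triple_product' hq0 hq hζ0).mul (tendsto_triple_product' hq0 hq
    (inv_ne_zero (pow_ne_zero 2 hζ0)))).const_mul (ζ ^ 2)).mul
    ((tendsto_qFac (norm_pow_lt_one hq two_ne_zero)).mul (tendsto_qFac h5))
  have hR := (((tendsto_qFac hq).pow 3).mul (tendsto_qFac h10)).neg
  refine tendsto_nhds_unique (hL.congr fun N ↦ ?_) hR
  have hc : ζ ^ 2 * ((1 + ζ⁻¹) * (1 + ζ ^ 2)) = -1 := by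
    rw [hi]; linear_combination hζ + (ζ + ζ ^ 3) * hζ5
  rw [inv_inv, mul_mul_mul_comm (1 + ζ⁻¹), ← mul_assoc (ζ ^ 2), hc, mul_assoc, neg_one_mul, neg_inj]
  simp only [qFac]
  rw [← prod_mul_distrib, ← prod_mul_distrib, ← prod_mul_distrib, ← prod_pow, ← prod_mul_distrib]
  refine prod_congr rfl fun i _ ↦ ?_
  rw [one_sub_sq_pow, hi, hi2, ← pow_mul q 5, ← pow_mul q 10, mul_comm 5, mul_comm 10, pow_mul,
    pow_mul q (i + 1) 10]
  generalize q ^ (i + 1) = x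
  have hx : (1 + ζ * x) * (1 + ζ ^ 4 * x) * (1 + ζ ^ 3 * x) * (1 + ζ ^ 2 * x) * (1 + x)
      = 1 + x ^ 5 := by
    have h1 : (1 + ζ * x) * (1 + ζ ^ 4 * x) = 1 + (ζ + ζ ^ 4) * x + x ^ 2 := by
      linear_combination x ^ 2 * hζ5
    have h2 : (1 + ζ ^ 3 * x) * (1 + ζ ^ 2 * x) = 1 + (-1 - (ζ + ζ ^ 4)) * x + x ^ 2 := by
      linear_combination x ^ 2 * hζ5 + x * hζ
    have h3 : (ζ + ζ ^ 4) ^ 2 = 1 - (ζ + ζ ^ 4) := by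
      linear_combination hζ + (2 + ζ ^ 3) * hζ5
    rw [h1, mul_assoc _ (1 + ζ ^ 3 * x), h2]
    linear_combination (-x ^ 2 - x ^ 3) * h3
  linear_combination (1 - x) ^ 3 * (1 - x ^ 5) * hx

/-- The residue class modulo `2 + i` of `(2a + 1) + (2b + 1)i`, up to the factor `2`. -/
def residueClass (p : ℤ × ℤ) : ZMod 5 := ((p.1 - 2 * p.2 + 2 : ℤ) : ZMod 5)

/-- The square of the theta series `∑_j q^(j(j+1)/2)` as a double series,
weighted by a function of the residue class. -/
noncomputable def twistedSeries (q : ℂ) (g : ZMod 5 → ℂ) : ℂ :=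
  ∑' p : ℤ × ℤ, g (residueClass p) * q ^ (tri p.1 + tri p.2)

lemma thetaSeries_mul_thetaSeries {q z w : ℂ} (hq0 : q ≠ 0) (hq : ‖q‖ < 1) (hz : z ≠ 0)
    (hw : w ≠ 0) : thetaSeries q z * thetaSeries q w
      = ∑' p : ℤ × ℤ, q ^ (tri p.1 + tri p.2) * (z ^ p.1 * w ^ p.2) := by
  rw [thetaSeries, thetaSeries, tsum_mul_tsum_of_summable_norm (summable_theta hq0 hq hz).norm
    (summable_theta hq0 hq hw).norm]
  refine tsum_congr fun p ↦ ?_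
  rw [zpow_add₀ hq0]
  ring

lemma summable_twistedSeries {q : ℂ} (hq0 : q ≠ 0) (hq : ‖q‖ < 1) (g : ZMod 5 → ℂ) :
    Summable fun p : ℤ × ℤ ↦ g (residueClass p) * q ^ (tri p.1 + tri p.2) := by
  have hs := (summable_theta hq0 hq one_ne_zero).norm
  have h := (summable_mul_of_summable_norm hs hs).norm.mul_left (∑ x, ‖g x‖)
  refine h.of_norm_bounded fun p ↦ ?_
  rw [norm_mul, zpow_add₀ hq0]
  simp only [one_zpow, mul_one]
  gcongr
  exact single_le_sum (f := fun x ↦ ‖g x‖) (fun _ _ ↦ norm_nonneg _) (mem_univ _)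

/-- Multiplication by `i` on the odd Gaussian integers `(2a + 1) + (2b + 1)i`. -/
def mulI : ℤ × ℤ ≃ ℤ × ℤ where
  toFun p := (-(p.2 + 1), p.1)
  invFun p := (p.2, -(p.1 + 1))
  left_inv p := by ext <;> simp
  right_inv p := by ext <;> simp

lemma residueClass_mulI (p : ℤ × ℤ) : residueClass (mulI p) = -2 * residueClass p := by
  have h : (5 : ZMod 5) = 0 := rfl
  simp only [residueClass, mulI, Equiv.coe_fn_mk]
  push_cast
  linear_combination (1 - (p.2 : ZMod 5)) * h

lemma twistedSeries_neg_two_mul (q : ℂ) (g : ZMod 5 → ℂ) :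
    twistedSeries q (fun x ↦ g (-2 * x)) = twistedSeries q g := by
  rw [twistedSeries, twistedSeries]
  conv_rhs => rw [← mulI.tsum_eq]
  refine tsum_congr fun p ↦ ?_
  rw [residueClass_mulI]
  simp only [mulI, Equiv.coe_fn_mk, tri_neg_add_one, add_comm]

/-- Averaging over the rotations. -/
lemma four_mul_twistedSeries {q : ℂ} (hq0 : q ≠ 0) (hq : ‖q‖ < 1) (g : ZMod 5 → ℂ) :
    4 * twistedSeries q g = (g 1 + g 2 + g 3 + g 4) *
      (twistedSeries q (fun _ ↦ 1) - twistedSeries q (fun x ↦ if x = 0 then 1 else 0))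
      + 4 * g 0 * twistedSeries q (fun x ↦ if x = 0 then 1 else 0) := by
  have h1 := twistedSeries_neg_two_mul q g
  have h2 := twistedSeries_neg_two_mul q (fun x ↦ g (-2 * x))
  have h3 := twistedSeries_neg_two_mul q (fun x ↦ g (-2 * (-2 * x)))
  have hsum : twistedSeries q g + twistedSeries q (fun x ↦ g (-2 * x))
      + twistedSeries q (fun x ↦ g (-2 * (-2 * x)))
      + twistedSeries q (fun x ↦ g (-2 * (-2 * (-2 * x))))
      = (g 1 + g 2 + g 3 + g 4) *
      (twistedSeries q (fun _ ↦ 1) - twistedSeries q (fun x ↦ if x = 0 then 1 else 0))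
      + 4 * g 0 * twistedSeries q (fun x ↦ if x = 0 then 1 else 0) := by
    have hs : ∀ g, HasSum _ (twistedSeries q g) := fun g ↦
      (summable_twistedSeries hq0 hq g).hasSum
    have hl := ((((hs g).add (hs fun x ↦ g (-2 * x))).add (hs fun x ↦ g (-2 * (-2 * x)))).add
      (hs fun x ↦ g (-2 * (-2 * (-2 * x)))))
    have hr := ((((hs fun _ ↦ 1).sub (hs fun x ↦ if x = 0 then 1 else 0)).mul_left
      (g 1 + g 2 + g 3 + g 4))).add
      ((hs fun x ↦ if x = 0 then 1 else 0).mul_left (4 * g 0))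
    rw [← hl.tsum_eq, ← hr.tsum_eq]
    refine tsum_congr fun p ↦ ?_
    have key : ∀ x : ZMod 5, g x + g (-2 * x) + g (-2 * (-2 * x)) + g (-2 * (-2 * (-2 * x)))
        = (g 1 + g 2 + g 3 + g 4) * (1 - if x = 0 then 1 else 0)
          + 4 * g 0 * if x = 0 then 1 else 0 := by
      intro x
      have hx : x = 0 ∨ x = 1 ∨ x = 2 ∨ x = 3 ∨ x = 4 := by revert x; decide
      rcases hx with rfl | rfl | rfl | rfl | rfl
      · simp only [mul_zero, if_true]; ring
      · rw [if_neg (by decide), show (-2 * 1 : ZMod 5) = 3 by decide,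
          show (-2 * 3 : ZMod 5) = 4 by decide, show (-2 * 4 : ZMod 5) = 2 by decide]
        ring
      · rw [if_neg (by decide), show (-2 * 2 : ZMod 5) = 1 by decide,
          show (-2 * 1 : ZMod 5) = 3 by decide, show (-2 * 3 : ZMod 5) = 4 by decide]
        ring
      · rw [if_neg (by decide), show (-2 * 3 : ZMod 5) = 4 by decide,
          show (-2 * 4 : ZMod 5) = 2 by decide, show (-2 * 2 : ZMod 5) = 1 by decide]
        ring
      · rw [if_neg (by decide), show (-2 * 4 : ZMod 5) = 2 by decide,
          show (-2 * 2 : ZMod 5) = 1 by decide, show (-2 * 1 : ZMod 5) = 3 by decide]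
        ring
    linear_combination q ^ (tri p.1 + tri p.2) * key (residueClass p)
  linear_combination hsum - 3 * h1 - 2 * h2 - h3

lemma twistedSeries_one {q : ℂ} (hq0 : q ≠ 0) (hq : ‖q‖ < 1) :
    twistedSeries q (fun _ ↦ 1) = thetaSeries q 1 ^ 2 := by
  rw [sq, thetaSeries_mul_thetaSeries hq0 hq one_ne_zero one_ne_zero, twistedSeries]
  simp

/-- Restriction of the double series to the coset parametrised by `(m, n) ↦ (2m - n, m + 2n + c)`. -/
lemma twistedSeries_coset (q : ℂ) (c : ℤ) :
    twistedSeries q (fun x ↦ if x = ((2 - 2 * c : ℤ) : ZMod 5) then 1 else 0)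
      = ∑' p : ℤ × ℤ, q ^ (tri (2 * p.1 - p.2) + tri (p.1 + 2 * p.2 + c)) := by
  have hinj : Function.Injective fun p : ℤ × ℤ ↦ (2 * p.1 - p.2, p.1 + 2 * p.2 + c) := by
    rintro ⟨a, b⟩ ⟨a', b'⟩ h
    simp only [Prod.mk.injEq] at h ⊢
    omega
  rw [twistedSeries, ← hinj.tsum_eq]
  · refine tsum_congr fun p ↦ ?_
    rw [if_pos, one_mul]
    rw [residueClass, ZMod.intCast_eq_intCast_iff_dvd_sub]
    exact ⟨p.2, by push_cast; ring⟩
  · rintro ⟨a, b⟩ h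
    have h' : residueClass (a, b) = ((2 - 2 * c : ℤ) : ZMod 5) := by
      by_contra hne
      exact h (by simp only [if_neg hne, zero_mul])
    rw [residueClass, ZMod.intCast_eq_intCast_iff_dvd_sub] at h'
    obtain ⟨k, hk⟩ := h'
    push_cast at hk
    refine ⟨(b - 2 * k - c, k), ?_⟩
    simp only [Prod.mk.injEq]
    omega

lemma twistedSeries_zero_class {q : ℂ} (hq0 : q ≠ 0) (hq : ‖q‖ < 1) :
    twistedSeries q (fun x ↦ if x = 0 then 1 else 0) = q * thetaSeries (q ^ 5) 1 ^ 2 := by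
  have h := twistedSeries_coset q 1
  rw [show ((2 - 2 * 1 : ℤ) : ZMod 5) = 0 by decide] at h
  rw [h, sq, thetaSeries_mul_thetaSeries (pow_ne_zero 5 hq0)
    (norm_pow_lt_one hq (by norm_num : 5 ≠ 0)) one_ne_zero one_ne_zero, ← tsum_mul_left]
  refine tsum_congr fun p ↦ ?_
  have e : tri (2 * p.1 - p.2) + tri (p.1 + 2 * p.2 + 1) = 1 + 5 * (tri p.1 + tri p.2) := by
    have h1 := two_mul_tri (2 * p.1 - p.2)
    have h2 := two_mul_tri (p.1 + 2 * p.2 + 1)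
    have h3 := two_mul_tri p.1
    have h4 := two_mul_tri p.2
    linarith
  rw [e, zpow_add₀ hq0, zpow_mul, zpow_one, one_zpow, one_zpow, mul_one, mul_one]
  norm_cast

lemma twistedSeries_two_class {q : ℂ} (hq0 : q ≠ 0) (hq : ‖q‖ < 1) :
    twistedSeries q (fun x ↦ if x = 2 then 1 else 0)
      = thetaSeries (q ^ 5) q⁻¹ * thetaSeries (q ^ 5) (q ^ 2)⁻¹ := by
  have h := twistedSeries_coset q 0
  rw [show ((2 - 2 * 0 : ℤ) : ZMod 5) = 2 by decide] at h
  rw [h, thetaSeries_mul_thetaSeries (pow_ne_zero 5 hq0)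
    (norm_pow_lt_one hq (by norm_num : 5 ≠ 0)) (inv_ne_zero hq0)
    (inv_ne_zero (pow_ne_zero 2 hq0))]
  refine tsum_congr fun p ↦ ?_
  have e : tri (2 * p.1 - p.2) + tri (p.1 + 2 * p.2 + 0)
      = 5 * (tri p.1 + tri p.2) + (-p.1 + 2 * -p.2) := by
    have h1 := two_mul_tri (2 * p.1 - p.2)
    have h2 := two_mul_tri (p.1 + 2 * p.2 + 0)
    have h3 := two_mul_tri p.1
    have h4 := two_mul_tri p.2
    linarith
  rw [e, zpow_add₀ hq0, zpow_add₀ hq0, zpow_mul, zpow_mul, inv_zpow', inv_zpow']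
  norm_cast

lemma twistedSeries_root_of_unity {q ζ : ℂ} (hq0 : q ≠ 0) (hq : ‖q‖ < 1) (hζ : ζ ^ 5 = 1) :
    twistedSeries q (fun x ↦ ζ ^ x.val)
      = ζ ^ 2 * (thetaSeries q ζ * thetaSeries q (ζ ^ 2)⁻¹) := by
  have hζ0 : ζ ≠ 0 := by rintro rfl; simp at hζ
  have hval : ∀ n : ℤ, ζ ^ ((n : ZMod 5)).val = ζ ^ n := by
    intro n
    rw [← zpow_natCast, ZMod.val_intCast]
    conv_rhs => rw [← Int.emod_add_mul_ediv n (5 : ℕ), zpow_add₀ hζ0, zpow_mul]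
    rw [zpow_natCast, hζ, one_zpow, mul_one]
  rw [thetaSeries_mul_thetaSeries hq0 hq hζ0 (inv_ne_zero (pow_ne_zero 2 hζ0)), twistedSeries,
    ← tsum_mul_left]
  refine tsum_congr fun p ↦ ?_
  rw [residueClass, hval, zpow_add₀ hζ0, zpow_sub₀ hζ0, zpow_mul, inv_zpow]
  norm_cast
  ring

lemma thetaSeries_sq_sub {q : ℂ} (hq0 : q ≠ 0) (hq : ‖q‖ < 1) :
    (thetaSeries q 1 ^ 2 - q * thetaSeries (q ^ 5) 1 ^ 2) * (eulerProd q * eulerProd (q ^ 10))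
      = 4 * (eulerProd (q ^ 2) * eulerProd (q ^ 5) ^ 3) := by
  have h := four_mul_twistedSeries hq0 hq fun x ↦ if x = 2 then 1 else 0
  rw [twistedSeries_two_class hq0 hq, twistedSeries_one hq0 hq, twistedSeries_zero_class hq0 hq,
    if_neg (by decide), if_pos rfl, if_neg (by decide), if_neg (by decide),
    if_neg (by decide)] at h
  linear_combination 4 * thetaSeries_quintic_mul_eulerProd hq0 hq
    - eulerProd q * eulerProd (q ^ 10) * h

lemma thetaSeries_sq_sub_five {q : ℂ} (hq0 : q ≠ 0) (hq : ‖q‖ < 1) :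
    (thetaSeries q 1 ^ 2 - 5 * q * thetaSeries (q ^ 5) 1 ^ 2)
        * (eulerProd (q ^ 2) * eulerProd (q ^ 5))
      = 4 * (eulerProd q ^ 3 * eulerProd (q ^ 10)) := by
  obtain ⟨ζ, hprim⟩ : ∃ ζ : ℂ, IsPrimitiveRoot ζ 5 :=
    ⟨_, Complex.isPrimitiveRoot_exp 5 (by norm_num)⟩
  have hζ : 1 + ζ + ζ ^ 2 + ζ ^ 3 + ζ ^ 4 = 0 := by
    simpa [sum_range_succ] using hprim.geom_sum_eq_zero (by norm_num)
  have h := four_mul_twistedSeries hq0 hq fun x ↦ ζ ^ x.val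
  rw [twistedSeries_root_of_unity hq0 hq hprim.pow_eq_one, twistedSeries_one hq0 hq,
    twistedSeries_zero_class hq0 hq, show (0 : ZMod 5).val = 0 from rfl,
    show (1 : ZMod 5).val = 1 from rfl, show (2 : ZMod 5).val = 2 from rfl,
    show (3 : ZMod 5).val = 3 from rfl, show (4 : ZMod 5).val = 4 from rfl] at h
  linear_combination -4 * thetaSeries_root_of_unity_mul_eulerProd hq0 hq hζ
    + eulerProd (q ^ 2) * eulerProd (q ^ 5) * (h + (thetaSeries q 1 ^ 2
      - q * thetaSeries (q ^ 5) 1 ^ 2) * hζ)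

lemma ofReal_fneg {q : ℝ} (hq0 : 0 < q) (hq1 : q < 1) : (fneg q : ℂ) = eulerProd q := by
  rw [← tsum_pentagonal (by exact_mod_cast hq0.ne') (by simpa [abs_of_pos hq0] using hq1), fneg,
    Complex.ofReal_tsum]
  push_cast
  rfl

lemma two_mul_ofReal_psi {q : ℝ} (hq0 : 0 < q) (hq1 : q < 1) :
    2 * (psi q : ℂ) = thetaSeries q 1 := by
  have hq0' : (q : ℂ) ≠ 0 := by exact_mod_cast hq0.ne'
  have hs := summable_theta hq0' (by simpa [abs_of_pos hq0] using hq1) one_ne_zero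
  have htri : ∀ n : ℕ, (q : ℂ) ^ tri n = (q : ℂ) ^ (n * (n + 1) / 2) := by
    intro n
    rw [← zpow_natCast]
    congr 1
  have hnat : Summable fun n : ℕ ↦ (q : ℂ) ^ tri n * 1 ^ (n : ℤ) :=
    hs.comp_injective Nat.cast_injective
  have hneg : ∀ n : ℕ, (q : ℂ) ^ tri (-(n + 1)) * 1 ^ (-(n + 1) : ℤ)
      = (q : ℂ) ^ tri n * 1 ^ (n : ℤ) := fun n ↦ by
    rw [tri_neg_add_one, one_zpow, one_zpow]
  have hneg' : Summable fun n : ℕ ↦ (q : ℂ) ^ tri (-(n + 1)) * 1 ^ (-(n + 1) : ℤ) :=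
    hnat.congr fun n ↦ (hneg n).symm
  have hpsi : (psi q : ℂ) = ∑' n : ℕ, (q : ℂ) ^ tri n * 1 ^ (n : ℤ) := by
    rw [psi, Complex.ofReal_tsum]
    exact tsum_congr fun n ↦ by rw [htri, one_zpow, mul_one, Complex.ofReal_pow]
  have h := tsum_of_nat_of_neg_add_one (f := fun j : ℤ ↦ (q : ℂ) ^ tri j * 1 ^ j) hnat hneg'
  rw [tsum_congr hneg, ← hpsi, ← two_mul] at h
  exact h.symm

theorem stmt_2 (q V : ℝ) (hq0 : 0 < q) (hq1 : q < 1)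
    (hV : V = psi q ^ 2 / (q * psi (q ^ 5) ^ 2)) (hV1 : V > 1) :
    fneg q ^ 2 * fneg (q ^ 2) ^ 2 / (q * fneg (q ^ 5) ^ 2 * fneg (q ^ 10) ^ 2)
      = V * (V - 5) / (V - 1) := by
  have hqc0 : (q : ℂ) ≠ 0 := by exact_mod_cast hq0.ne'
  have hqc1 : ‖(q : ℂ)‖ < 1 := by simpa [abs_of_pos hq0] using hq1
  have hf : ∀ n : ℕ, n ≠ 0 → (fneg (q ^ n) : ℂ) = eulerProd ((q : ℂ) ^ n) := fun n hn ↦ by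
    rw [ofReal_fneg (pow_pos hq0 n) (pow_lt_one₀ hq0.le hq1 hn), Complex.ofReal_pow]
  have hf0 : ∀ n : ℕ, n ≠ 0 → fneg (q ^ n) ≠ 0 := fun n hn h ↦
    eulerProd_ne_zero (norm_pow_lt_one hqc1 hn) (by rw [← hf n hn, h, Complex.ofReal_zero])
  have f1 := ofReal_fneg hq0 hq1
  have f2 := hf 2 (by norm_num)
  have f5 := hf 5 (by norm_num)
  have f10 := hf 10 (by norm_num)
  have p1 := two_mul_ofReal_psi hq0 hq1
  have p5 := two_mul_ofReal_psi (pow_pos hq0 5) (pow_lt_one₀ hq0.le hq1 (by norm_num : 5 ≠ 0))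
  rw [Complex.ofReal_pow] at p5
  have hψ1 : psi q * fneg q = fneg (q ^ 2) ^ 2 := by
    have h := thetaSeries_one_mul_eulerProd hqc0 hqc1
    rw [← p1, ← f1, ← f2] at h
    have h' : 2 * psi q * fneg q = 2 * fneg (q ^ 2) ^ 2 := by exact_mod_cast h
    linarith
  have hψ5 : psi (q ^ 5) * fneg (q ^ 5) = fneg (q ^ 10) ^ 2 := by
    have h := thetaSeries_one_mul_eulerProd (pow_ne_zero 5 hqc0)
      (norm_pow_lt_one hqc1 (by norm_num : 5 ≠ 0))
    rw [← pow_mul, ← p5, ← f5, ← f10] at h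
    have h' : 2 * psi (q ^ 5) * fneg (q ^ 5) = 2 * fneg (q ^ 10) ^ 2 := by exact_mod_cast h
    linarith
  have hA : (psi q ^ 2 - q * psi (q ^ 5) ^ 2) * (fneg q * fneg (q ^ 10))
      = fneg (q ^ 2) * fneg (q ^ 5) ^ 3 := by
    have h := thetaSeries_sq_sub hqc0 hqc1
    rw [← p1, ← p5, ← f1, ← f2, ← f5, ← f10] at h
    have h' : ((2 * psi q) ^ 2 - q * (2 * psi (q ^ 5)) ^ 2) * (fneg q * fneg (q ^ 10))
      = 4 * (fneg (q ^ 2) * fneg (q ^ 5) ^ 3) := by exact_mod_cast h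
    linarith
  have hB : (psi q ^ 2 - 5 * q * psi (q ^ 5) ^ 2) * (fneg (q ^ 2) * fneg (q ^ 5))
      = fneg q ^ 3 * fneg (q ^ 10) := by
    have h := thetaSeries_sq_sub_five hqc0 hqc1
    rw [← p1, ← p5, ← f1, ← f2, ← f5, ← f10] at h
    have h' : ((2 * psi q) ^ 2 - 5 * q * (2 * psi (q ^ 5)) ^ 2) * (fneg (q ^ 2) * fneg (q ^ 5))
      = 4 * (fneg q ^ 3 * fneg (q ^ 10)) := by exact_mod_cast h
    linarith
  have n1 : fneg q ≠ 0 := by simpa using hf0 1 one_ne_zero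
  have n2 := hf0 2 (by norm_num)
  have n5 := hf0 5 (by norm_num)
  have n10 := hf0 10 (by norm_num)
  have nψ5 : psi (q ^ 5) ≠ 0 := fun h ↦ n10 (by simpa [h] using hψ5.symm)
  have hq := hq0.ne'
  have eψ1 := eq_div_of_mul_eq n1 hψ1
  have eψ5 := eq_div_of_mul_eq n5 hψ5
  have eA := eq_div_of_mul_eq (mul_ne_zero n1 n10) hA
  have eB := eq_div_of_mul_eq (mul_ne_zero n2 n5) hB
  have hden : q * psi (q ^ 5) ^ 2 ≠ 0 := mul_ne_zero hq (pow_ne_zero 2 nψ5)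
  have eV1 : V - 1 = (psi q ^ 2 - q * psi (q ^ 5) ^ 2) / (q * psi (q ^ 5) ^ 2) := by
    rw [hV, sub_div, div_self hden]
  have eV5 : V - 5 = (psi q ^ 2 - 5 * q * psi (q ^ 5) ^ 2) / (q * psi (q ^ 5) ^ 2) := by
    rw [hV, mul_assoc, sub_div, mul_div_assoc, div_self hden, mul_one]
  rw [eV1, eV5, hV, eA, eB, eψ1, eψ5]
  field_simp
end
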